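/- arXiv:2010.12564 — 5 statements merged into one kernel-verified Lean document; each statement's English description precedes it below -/
import Mathlib

section
/- Let R be an integral domain of mixed characteristic p (i.e., R has characteristic 0 and p lies in every maximal ideal of R) and let I ⊆ R be an ideal. Then the epf closure of I·R^+ computed in R^+ equals the union of the epf closures (I·S)^epf over all intermediate rings R ⊆ S ⊆ R^+ that are module-finite over R; that is, (I R^+)^epf = ⋃_S (I S)^epf, where each (I S)^epf is computed in S using the identification S^+ = R^+. -/
open IsLocalRing TensorProduct
set_option synthInstance.maxHeartbeats 1000000
set_option maxHeartbeats 1000000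

/-- The absolute integral closure `R⁺` of a domain `R`: the integral closure of `R`
in an algebraic closure of its fraction field. -/
noncomputable abbrev RPlus (R : Type) [CommRing R] [IsDomain R] : Type :=
  ↥(integralClosure R (AlgebraicClosure (FractionRing R)))

/-- The epf closure of an ideal `J` of `R⁺`, computed in `R⁺`: `u` is in the closure iff
there is `c ≠ 0` in `R⁺` such that `d * u ∈ J + p^N R⁺` for all `N ≥ 1` and all
`n`-th roots `d` of `c` (`n ≥ 1`). -/
def epfPlus (p : ℕ) (R : Type) [CommRing R] [IsDomain R] (J : Ideal (RPlus R)) :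
    Set (RPlus R) :=
  {u | ∃ c : RPlus R, c ≠ 0 ∧ ∀ n N : ℕ, 0 < n → 0 < N →
    ∀ d : RPlus R, d ^ n = c → d * u ∈ J ⊔ Ideal.span {(p : RPlus R) ^ N}}

/-- For a domain `R` of mixed characteristic `p`, the epf closure of
`I R⁺` in `R⁺` is the union of the epf closures `(I S)^epf` over all intermediate
rings `R ⊆ S ⊆ R⁺` module-finite over `R` (computed using `S⁺ = R⁺`). -/
theorem stmt0 (R : Type) [CommRing R] [IsDomain R]
    (p : ℕ) [Fact p.Prime] [CharZero R]
    (hp : ∀ m : Ideal R, m.IsMaximal → (p : R) ∈ m)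
    (I : Ideal R) :
    epfPlus p R (Ideal.map (algebraMap R (RPlus R)) I) =
      ⋃ (S : Subalgebra R (RPlus R)) (_ : Module.Finite R S),
        {u : RPlus R | u ∈ S ∧ ∃ c : RPlus R, c ∈ S ∧ c ≠ 0 ∧
          ∀ n N : ℕ, 0 < n → 0 < N → ∀ d : RPlus R, d ^ n = c →
            d * u ∈ Ideal.map (algebraMap R (RPlus R)) I ⊔
              Ideal.span {(p : RPlus R) ^ N}} := by
  ext u
  simp only [epfPlus, Set.mem_iUnion, Set.mem_setOf_eq]
  constructor
  · rintro ⟨c, hc, h⟩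
    refine ⟨Algebra.adjoin R {u, c}, ?_, Algebra.subset_adjoin (by simp), c,
      Algebra.subset_adjoin (by simp), hc, h⟩
    have hfg := fg_adjoin_of_finite (R := R) (s := ({u, c} : Set (RPlus R)))
      (Set.toFinite _) (fun x _ => Algebra.IsIntegral.isIntegral x)
    exact Module.Finite.iff_fg.mpr hfg
  · rintro ⟨S, _, _, c, _, hc, h⟩
    exact ⟨c, hc, h⟩
end

section
/- Let R ⊆ S be a module-finite extension of complete Noetherian local domains of mixed characteristic p, where the residue field of R is F-finite. Suppose given R-linear maps ν : R^{n_1} → R^{n_0}, σ : R^{n_0} → S, and φ : R^{n_1} → R such that: the composite of σ with the projection S → S/R is surjective onto S/R with kernel of the composite R^{n_0} → S/R equal to the image of ν, and σ ∘ ν = ι ∘ φ where ι : R → S is the inclusion. Identify Hom_R(R^{n_1}, R) with R^{n_1} and let φ^∨ ∈ R^{n_1} be the element corresponding to φ, and let ν^∨ : R^{n_0} → R^{n_1} be the transpose of ν. Then φ^∨ lies in the epf closure (ν^∨(R^{n_0}))^epf_{R^{n_1}} of the submodule ν^∨(R^{n_0}) inside the free module R^{n_1}. (Every module-finite extension of such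 rings is epf-phantom.) -/
open IsLocalRing TensorProduct
set_option synthInstance.maxHeartbeats 1000000
set_option maxHeartbeats 1000000

/-- The epf closure of a submodule `W` of an `R`-module `M`: `u` is in the closure iff
there is `c ≠ 0` in `R` such that `d ⊗ u ∈ im(R⁺ ⊗ W → R⁺ ⊗ M) + p^N (R⁺ ⊗ M)` for all
`N ≥ 1` and all `n`-th roots `d ∈ R⁺` of `c` (`n ≥ 1`). -/
def epfMod (p : ℕ) (R : Type) [CommRing R] [IsDomain R]
    {M : Type} [AddCommGroup M] [Module R M] (W : Submodule R M) : Set M :=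
  {u | ∃ c : R, c ≠ 0 ∧ ∀ n N : ℕ, 0 < n → 0 < N →
    ∀ d : RPlus R, d ^ n = algebraMap R (RPlus R) c →
      d ⊗ₜ[R] u ∈ LinearMap.range (LinearMap.baseChange (RPlus R) W.subtype) ⊔
        Ideal.span {(p : RPlus R) ^ N} • (⊤ : Submodule (RPlus R) (RPlus R ⊗[R] M))}

/-- A field `k` of characteristic `p` is F-finite if it is a finite module over
its subfield `k^p` of `p`-th powers. -/
def FFinite (p : ℕ) (k : Type) [Field k] : Prop :=
  ∃ (m : ℕ) (s : Fin m → k), ∀ a : k, ∃ c : Fin m → k, a = ∑ i, (c i) ^ p * s i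

/-- Every module-finite extension `R → S` of complete local domains of mixed
characteristic `p` (with F-finite residue field of `R`) is epf-phantom: with a presentation
`R^{n₁} --ν--> R^{n₀} → S/R → 0` lifting the extension via `σ` and `φ`, the element
`φ^∨` lies in the epf closure of the column space of `ν^∨` in `R^{n₁}`. -/
theorem stmt7 (R S : Type) [CommRing R] [IsDomain R] [IsNoetherianRing R] [IsLocalRing R]
    [IsAdicComplete (maximalIdeal R) R]
    [CommRing S] [IsDomain S] [IsNoetherianRing S] [IsLocalRing S]
    [IsAdicComplete (maximalIdeal S) S]
    [Algebra R S] (hinj : Function.Injective (algebraMap R S)) [Module.Finite R S]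
    (p : ℕ) [Fact p.Prime] [CharZero R] [CharZero S]
    (hpR : (p : R) ∈ maximalIdeal R) (hpS : (p : S) ∈ maximalIdeal S)
    (hk : FFinite p (ResidueField R))
    (n₀ n₁ : ℕ)
    (ν : (Fin n₁ → R) →ₗ[R] (Fin n₀ → R))
    (σ : (Fin n₀ → R) →ₗ[R] S)
    (φ : (Fin n₁ → R) →ₗ[R] R)
    (hsurj : Function.Surjective
      ((LinearMap.range (Algebra.linearMap R S)).mkQ.comp σ))
    (hker : LinearMap.ker ((LinearMap.range (Algebra.linearMap R S)).mkQ.comp σ) =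
      LinearMap.range ν)
    (hcomm : σ.comp ν = (Algebra.linearMap R S).comp φ) :
    (fun i => φ (Pi.single i 1)) ∈
      epfMod p R (Submodule.span R
        (Set.range (fun j : Fin n₀ => fun i : Fin n₁ => ν (Pi.single i 1) j))) := by
  classical
  have : FaithfulSMul R S := (faithfulSMul_iff_algebraMap_injective R S).2 hinj
  have : Module.IsTorsionFree R S := inferInstance
  have hi : Function.Injective (algebraMap R (AlgebraicClosure (FractionRing R))) := by
    rw [IsScalarTower.algebraMap_eq R (FractionRing R)]
    exact (algebraMap (FractionRing R) _).injective.comp (IsFractionRing.injective R _)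
  have : FaithfulSMul R (AlgebraicClosure (FractionRing R)) := (faithfulSMul_iff_algebraMap_injective R _).2 hi
  have : Algebra.IsIntegral R S := inferInstance
  have : Algebra.IsAlgebraic R S := inferInstance
  let θ₀ : S →ₐ[R] AlgebraicClosure (FractionRing R) := IsAlgClosed.lift
  let θ : S →ₐ[R] RPlus R := θ₀.codRestrict _ (fun s =>
    (Algebra.IsIntegral.isIntegral (R := R) s).map θ₀)
  refine ⟨1, one_ne_zero, fun n N _ _ d _ => Submodule.mem_sup_left ?_⟩
  have key : ∀ i, algebraMap R (RPlus R) (φ (Pi.single i 1)) =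
      ∑ j, ν (Pi.single i 1) j • θ (σ (Pi.single j 1)) := by
    intro i
    have h := LinearMap.congr_fun hcomm (Pi.single i 1)
    simp only [LinearMap.comp_apply, Algebra.linearMap_apply] at h
    rw [← θ.commutes, ← h]
    conv_lhs => rw [pi_eq_sum_univ' (ν (Pi.single i 1))]
    simp only [map_sum, map_smul]
  have tens : ∀ (a : RPlus R) (v : Fin n₁ → R),
      a ⊗ₜ[R] v = ∑ i, (v i • a) ⊗ₜ[R] (Pi.single i 1 : Fin n₁ → R) := by
    intro a v
    simp only [TensorProduct.smul_tmul, ← TensorProduct.tmul_sum]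
    congr 1
    ext k
    simp [Finset.sum_apply, Pi.single_apply]
  have e : d ⊗ₜ[R] (fun i => φ (Pi.single i 1)) =
      ∑ j, (d * θ (σ (Pi.single j 1))) ⊗ₜ[R] (fun i : Fin n₁ => ν (Pi.single i 1) j) := by
    rw [tens]
    conv_rhs => enter [2, j]; rw [tens]
    rw [Finset.sum_comm]
    refine Finset.sum_congr rfl fun i _ => ?_
    rw [← TensorProduct.sum_tmul, Algebra.smul_def, key, Finset.sum_mul]
    congr 1
    refine Finset.sum_congr rfl fun j _ => ?_
    rw [smul_mul_assoc, mul_comm d]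
  rw [e]
  refine Submodule.sum_mem _ fun j _ => ?_
  exact ⟨(d * θ (σ (Pi.single j 1))) ⊗ₜ[R] ⟨_, Submodule.subset_span ⟨j, rfl⟩⟩, by
    simp only [LinearMap.baseChange_tmul, Submodule.subtype_apply]⟩
end

section
/- Let (R, m) be a complete Noetherian local domain of prime characteristic p, let R^+ be its absolute integral closure, let x_1, …, x_n be part of a system of parameters of R, and let J be a proper finitely generated ideal of R^+. Then ⋂_{N ≥ 1} ((x_1, …, x_n)R^+ + J^N) = (x_1, …, x_n)R^+. -/
open IsLocalRing TensorProduct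
set_option synthInstance.maxHeartbeats 1000000
set_option maxHeartbeats 1000000

/-- A system of parameters of a local ring: `d` elements generating an ideal whose
radical is the maximal ideal, where `d` is the Krull dimension. -/
def IsSOP (R : Type) [CommRing R] [IsLocalRing R] {d : ℕ} (x : Fin d → R) : Prop :=
  ringKrullDim R = d ∧ (Ideal.span (Set.range x)).radical = maximalIdeal R

/-- Part of a system of parameters: a sequence extendable to a full system of parameters. -/
def IsPartialSOP (R : Type) [CommRing R] [IsLocalRing R] {n : ℕ} (x : Fin n → R) : Prop :=
  ∃ (d : ℕ) (hd : n ≤ d) (y : Fin d → R), IsSOP R y ∧ ∀ i : Fin n, y (Fin.castLE hd i) = x i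


def IsCart (p : ℕ) {A : Type} [CommRing A] (θ : A →+ A) : Prop :=
  ∀ a b : A, θ (a ^ p * b) = a * θ b

def PropC (p : ℕ) (A : Type) [CommRing A] : Prop :=
  ∀ (l : ℕ) (a : Fin l → A),
    a ∈ Submodule.span A {v | ∃ θ : A →+ A, IsCart p θ ∧ v = fun i => (θ (a i)) ^ p}

noncomputable def fp (p : ℕ) {A : Type} [CommRing A] (J : Ideal A) (e : ℕ) : Ideal A :=
  Ideal.span ((fun j => j ^ (p ^ e)) '' (J : Set A))

section
variable {p : ℕ} {A : Type} [CommRing A]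

theorem pow_mem_fp {J : Ideal A} {j : A} (hj : j ∈ J) (e : ℕ) : j ^ (p ^ e) ∈ fp p J e :=
  Ideal.subset_span ⟨j, hj, rfl⟩

theorem fp_zero (J : Ideal A) : fp p J 0 = J := by
  simp [fp]

theorem cart_fp {J : Ideal A} {e : ℕ} {θ : A →+ A} (hθ : IsCart p θ) {a : A}
    (ha : a ∈ fp p J (e + 1)) : θ a ∈ fp p J e := by
  refine Submodule.span_induction (p := fun x _ => ∀ r, θ (r * x) ∈ fp p J e) ?_ ?_ ?_ ?_ ha 1
    |> fun h => by simpa using h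
  · rintro _ ⟨j, hj, rfl⟩ r
    have : r * j ^ p ^ (e + 1) = (j ^ p ^ e) ^ p * r := by rw [mul_comm, ← pow_mul, pow_succ]
    simp only [this]
    rw [hθ]
    exact Ideal.mul_mem_right _ _ (pow_mem_fp hj e)
  · intro r; simp
  · intro x y _ _ hx hy r; rw [mul_add, map_add]; exact add_mem (hx r) (hy r)
  · intro s x _ hx r; rw [smul_eq_mul, ← mul_assoc]; exact hx _

theorem fp_fp [Fact p.Prime] [CharP A p] (J : Ideal A) (e f : ℕ) :
    fp p (fp p J e) f = fp p J (e + f) := by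
  apply le_antisymm
  · refine Ideal.span_le.2 ?_
    rintro _ ⟨j, hj, rfl⟩
    simp only [SetLike.mem_coe] at hj ⊢
    refine Submodule.span_induction (p := fun x _ => x ^ p ^ f ∈ fp p J (e + f)) ?_ ?_ ?_ ?_ hj
    · rintro _ ⟨j, hj, rfl⟩
      simp only
      rw [← pow_mul, ← pow_add]; exact pow_mem_fp hj _
    · rw [zero_pow (pow_ne_zero _ (Fact.out : p.Prime).ne_zero)]; exact zero_mem _
    · intro x y _ _ hx hy; rw [add_pow_char_pow]; exact add_mem hx hy
    · intro a x _ hx; rw [smul_eq_mul, mul_pow]; exact Ideal.mul_mem_left _ _ hx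
  · refine Ideal.span_le.2 ?_
    rintro _ ⟨j, hj, rfl⟩
    simp only [SetLike.mem_coe]
    rw [pow_add, pow_mul]
    exact pow_mem_fp (pow_mem_fp hj _) _

theorem propC_mem (hC : PropC p A) (n : A) :
    n ∈ Ideal.span {v | ∃ θ : A →+ A, IsCart p θ ∧ v = (θ n) ^ p} := by
  have h := hC 1 (fun _ => n)
  have h2 := Submodule.mem_map_of_mem (f := LinearMap.proj (R := A) (φ := fun _ : Fin 1 => A) 0) h
  rw [Submodule.map_span] at h2
  refine Submodule.span_mono ?_ h2
  rintro _ ⟨v, ⟨θ, hθ, rfl⟩, rfl⟩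
  exact ⟨θ, hθ, rfl⟩

theorem lemA [Fact p.Prime] [IsDomain A] [IsNoetherianRing A] [IsLocalRing A]
    (hC : PropC p A) {J : Ideal A} {a c : A} (hc : c ≠ 0)
    (h : ∀ e, c * a ^ (p ^ e) ∈ fp p J e) : a ∈ J := by
  let N : Ideal A :=
    { carrier := {c | ∀ e, c * a ^ (p ^ e) ∈ fp p J e}
      zero_mem' := fun e => by rw [zero_mul]; exact zero_mem _
      add_mem' := fun {x y} hx hy e => by rw [add_mul]; exact add_mem (hx e) (hy e)
      smul_mem' := fun r x hx e => by
        rw [smul_eq_mul, mul_assoc]; exact Ideal.mul_mem_left _ _ (hx e) }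
  have hN : ∀ θ : A →+ A, IsCart p θ → ∀ n ∈ N, θ n ∈ N := by
    intro θ hθ n hn e
    have : θ n * a ^ p ^ e = θ (n * a ^ p ^ (e+1)) := by
      rw [mul_comm, ← hθ, ← pow_mul, ← pow_succ, mul_comm]
    rw [this]
    exact cart_fp hθ (hn (e+1))
  by_cases hT : N = ⊤
  · have h1 : (1 : A) ∈ N := hT ▸ Submodule.mem_top
    have := h1 0
    rw [fp_zero] at this
    simpa using this
  exfalso
  have key : ∀ k, N ≤ maximalIdeal A ^ (k + 1) := by
    intro k
    induction k with
    | zero => simpa using le_maximalIdeal hT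
    | succ k ih =>
      intro n hn
      refine (Ideal.span_le.2 ?_ : Ideal.span _ ≤ maximalIdeal A ^ (k + 1 + 1)) (propC_mem hC n)
      rintro _ ⟨θ, hθ, rfl⟩
      have h1 := Ideal.pow_mem_pow (ih (hN θ hθ n hn)) p
      rw [← pow_mul] at h1
      refine Ideal.pow_le_pow_right ?_ h1
      have := (Fact.out : p.Prime).two_le
      nlinarith
  apply hc
  have : c ∈ (⨅ i : ℕ, maximalIdeal A ^ i) := by
    rw [Submodule.mem_iInf]
    intro i
    exact Ideal.pow_le_pow_right (Nat.le_succ i) (key i h)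
  rw [Ideal.iInf_pow_eq_bot_of_isLocalRing _ (Ideal.IsPrime.ne_top')] at this
  simpa using this

end


/-- `J T` as an `A`-submodule of `Ω`, with `T` the integral closure of `A` in `Ω`. -/
noncomputable def JT (A Ω : Type) [CommRing A] [Field Ω] [Algebra A Ω] (J : Ideal A) :
    Submodule A Ω := J • Subalgebra.toSubmodule (integralClosure A Ω)

section
variable {p : ℕ} {A : Type} [CommRing A]

theorem isInt_of_propC [Fact p.Prime] [IsDomain A] [IsNoetherianRing A] [IsLocalRing A]
    (hC : PropC p A) : IsIntegrallyClosed A := by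
  rw [isIntegrallyClosed_iff (FractionRing A)]
  intro x hx
  have hfg : (Subalgebra.toSubmodule (Algebra.adjoin A {x})).FG := hx.fg_adjoin_singleton
  obtain ⟨c, hc, hcx⟩ := FractionalIdeal.isFractional_of_fg (S := nonZeroDivisors A) hfg
  obtain ⟨a, b, hb, rfl⟩ := IsFractionRing.div_surjective (A := A) x
  have hb0 : b ≠ 0 := nonZeroDivisors.ne_zero hb
  have hc0 : c ≠ 0 := nonZeroDivisors.ne_zero hc
  have hbK : algebraMap A (FractionRing A) b ≠ 0 := by
    simpa using hb0
  have : a ∈ Ideal.span {b} := by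
    refine lemA hC hc0 fun e => ?_
    obtain ⟨z, hz⟩ := hcx ((algebraMap A (FractionRing A) a / algebraMap A _ b) ^ (p ^ e))
      (pow_mem (Algebra.self_mem_adjoin_singleton _ _) _)
    have : c * a ^ p ^ e = z * b ^ p ^ e := by
      apply IsFractionRing.injective A (FractionRing A)
      rw [map_mul, map_mul, map_pow, map_pow, hz, Algebra.smul_def, div_pow]
      field_simp
    rw [this]
    exact Ideal.mul_mem_left _ _ (pow_mem_fp (Ideal.mem_span_singleton_self b) e)
  obtain ⟨y, hy⟩ := Ideal.mem_span_singleton.1 this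
  refine ⟨y, ?_⟩
  rw [hy, map_mul]
  field_simp

variable {K Ω : Type} [Field K] [Algebra A K] [Field Ω] [Algebra K Ω]
  [Algebra A Ω] [IsScalarTower A K Ω]

theorem exists_fg_fp [Fact p.Prime] [CharP Ω p] {J : Ideal A} {v : Ω}
    (hv : v ∈ JT A Ω J) :
    ∃ M : Submodule A Ω, M.FG ∧ ∀ e, v ^ (p ^ e) ∈ fp p J e • M := by
  refine Submodule.smul_induction_on hv ?_ ?_
  · intro j hj s hs
    refine ⟨Subalgebra.toSubmodule (Algebra.adjoin A {s}), IsIntegral.fg_adjoin_singleton hs, ?_⟩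
    intro e
    rw [smul_pow]
    exact Submodule.smul_mem_smul (pow_mem_fp hj e)
      (pow_mem (Algebra.self_mem_adjoin_singleton _ _) _)
  · rintro x y ⟨M, hM, hx⟩ ⟨M', hM', hy⟩
    refine ⟨M ⊔ M', hM.sup hM', fun e => ?_⟩
    rw [add_pow_char_pow]
    exact add_mem (Submodule.smul_mono le_rfl le_sup_left (hx e))
      (Submodule.smul_mono le_rfl le_sup_right (hy e))

theorem JT_le_int {J : Ideal A} {v : Ω} (hv : v ∈ JT A Ω J) : IsIntegral A v :=
  (Submodule.smul_le_right (I := J) (N := Subalgebra.toSubmodule (integralClosure A Ω))) hv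

/-- properties of a trace map on a subset. -/
structure TrLike (p : ℕ) (A : Type) {K Ω : Type} [CommRing A] [Field K] [Algebra A K] [Field Ω]
    [Algebra K Ω] [Algebra A Ω] (L : Set Ω) (Tr : Ω →ₗ[K] K) : Prop where
  frob : ∀ v ∈ L, ∀ e, Tr (v ^ (p ^ e)) = (Tr v) ^ (p ^ e)
  int : ∀ v ∈ L, IsIntegral A v → ∃ a, algebraMap A K a = Tr v

theorem lemB [Fact p.Prime] [CharP Ω p] [IsDomain A] [IsNoetherianRing A] [IsLocalRing A]
    [IsFractionRing A K]
    (hC : PropC p A) {L : Set Ω} {Tr : Ω →ₗ[K] K} (hT : TrLike p A L Tr)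
    {J : Ideal A} {v : Ω} (hL : v ∈ L) (hv : v ∈ JT A Ω J) :
    ∃ a ∈ J, algebraMap A K a = Tr v := by
  obtain ⟨a, ha⟩ := hT.int v hL (JT_le_int hv)
  refine ⟨a, ?_, ha⟩
  obtain ⟨M, hM, hMe⟩ := exists_fg_fp (p := p) hv
  obtain ⟨c, hc, hcx⟩ := FractionalIdeal.isFractional_of_fg (S := nonZeroDivisors A)
    (hM.map (Tr.restrictScalars A))
  have key : ∀ (I : Ideal A) (x : Ω), x ∈ I • M → ∃ z ∈ I, algebraMap A K z = c • Tr x := by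
    intro I x hx
    refine Submodule.smul_induction_on hx ?_ ?_
    · intro r hr m hm
      obtain ⟨z, hz⟩ := hcx (Tr m) ⟨m, hm, rfl⟩
      refine ⟨r * z, Ideal.mul_mem_right _ _ hr, ?_⟩
      have : Tr (r • m) = r • Tr m := (Tr.restrictScalars A).map_smul r m
      rw [map_mul, hz, this]
      simp only [Algebra.smul_def]; ring
    · rintro x y ⟨z, hz, hzx⟩ ⟨z', hz', hzy⟩
      exact ⟨z + z', add_mem hz hz', by rw [map_add, hzx, hzy, map_add, smul_add]⟩
  refine lemA hC (nonZeroDivisors.ne_zero hc) fun e => ?_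
  obtain ⟨z, hz, hze⟩ := key _ _ (hMe e)
  rw [hT.frob v hL, ← ha, Algebra.smul_def, ← map_pow, ← map_mul] at hze
  rwa [← IsFractionRing.injective A K hze]

end


section
variable {p : ℕ} {A : Type} [CommRing A]
variable {K Ω : Type} [Field K] [Algebra A K] [Field Ω] [Algebra K Ω]
  [Algebra A Ω] [IsScalarTower A K Ω]

open IntermediateField in
theorem exists_trace [Fact p.Prime] [CharP Ω p] [IsDomain A] [IsIntegrallyClosed A]
    [IsFractionRing A K] [IsAlgClosed Ω] {w : Ω} (hw : IsSeparable K w) :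
    ∃ Tr : Ω →ₗ[K] K, TrLike p A (K⟮w⟯ : Set Ω) Tr ∧ ∃ (n : ℕ) (e : Fin n → Ω),
      ∀ r ∈ K⟮w⟯, r = ∑ i : Fin n, Tr (w ^ (i : ℕ) * r) • e i := by
  have hsep : Algebra.IsSeparable K K⟮w⟯ :=
    IntermediateField.isSeparable_adjoin_simple_iff_isSeparable K Ω |>.2 hw
  have hfin : FiniteDimensional K K⟮w⟯ := adjoin.finiteDimensional hw.isIntegral
  obtain ⟨Tr, hTr⟩ := LinearMap.exists_extend (p := K⟮w⟯.toSubalgebra.toSubmodule)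
    (Algebra.trace K K⟮w⟯)
  have hTr' : ∀ x : K⟮w⟯, Tr (x : Ω) = Algebra.trace K K⟮w⟯ x := fun x =>
    LinearMap.congr_fun hTr x
  refine ⟨Tr, ⟨?_, ?_⟩, ?_⟩
  · intro v hv e
    have h1 := hTr' (⟨v, hv⟩ ^ (p ^ e))
    rw [show v ^ p ^ e = (((⟨v, hv⟩ : K⟮w⟯) ^ (p ^ e) : K⟮w⟯) : Ω) from rfl, h1,
      show Tr v = Algebra.trace K K⟮w⟯ ⟨v, hv⟩ from hTr' ⟨v, hv⟩]
    apply (algebraMap K Ω).injective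
    rw [map_pow (algebraMap K Ω), trace_eq_sum_embeddings Ω, trace_eq_sum_embeddings Ω,
      sum_pow_char_pow]
    exact Finset.sum_congr rfl fun σ _ => map_pow σ _ _
  · intro v hv hi
    have : IsScalarTower A K⟮w⟯ Ω := IsScalarTower.of_algebraMap_eq' rfl
    have hi' : IsIntegral A (⟨v, hv⟩ : K⟮w⟯) := by
      have : IsIntegral A (algebraMap K⟮w⟯ Ω ⟨v, hv⟩) := hi
      exact (isIntegral_algebraMap_iff (algebraMap K⟮w⟯ Ω).injective).1 this
    have h2 := Algebra.isIntegral_trace (R := A) (L := K) hi'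
    rw [show Tr v = Algebra.trace K K⟮w⟯ ⟨v, hv⟩ from hTr' ⟨v, hv⟩]
    exact IsIntegrallyClosed.isIntegral_iff.1 h2
  · let pb := adjoin.powerBasis hw.isIntegral
    let D := (Algebra.traceForm K K⟮w⟯).dualBasis (traceForm_nondegenerate K K⟮w⟯) pb.basis
    refine ⟨pb.dim, fun i => (D i : Ω), fun r hr => ?_⟩
    have h1 := D.sum_repr ⟨r, hr⟩
    have h2 := congrArg (algebraMap K⟮w⟯ Ω) h1
    rw [map_sum] at h2
    refine h2.symm.trans ?_
    refine Finset.sum_congr rfl fun i _ => ?_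
    have h3 : D.repr ⟨r, hr⟩ i = Tr (w ^ (i : ℕ) * r) := by
      rw [LinearMap.BilinForm.dualBasis_repr_apply, Algebra.traceForm_apply, ← hTr']
      congr 1
      rw [pb.basis_eq_pow]
      simp [pb, mul_comm]
    rw [h3]
    rfl
end


open Polynomial in
theorem exists_lang_root {Ω : Type} [Field Ω] [IsAlgClosed Ω] (p : ℕ) [Fact p.Prime] (n : ℕ)
    (α : ℕ → Ω) :
    ∃ Y : Ω, Y ^ p ^ (n + 1) = (∑ j ∈ Finset.range n, (α j * Y) ^ p ^ (j + 1)) - 1 := by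
  have hp := (Fact.out : p.Prime)
  let q : Polynomial Ω := 1 - ∑ j ∈ Finset.range n, C (α j ^ p ^ (j + 1)) * X ^ p ^ (j + 1)
  have hq : q.degree < ((p ^ (n + 1) : ℕ) : WithBot ℕ) := by
    refine lt_of_le_of_lt (degree_sub_le _ _) (max_lt ?_ ?_)
    · refine lt_of_le_of_lt degree_one_le ?_
      exact_mod_cast (pow_pos hp.pos _)
    · rw [degree_lt_iff_coeff_zero]
      intro m hm
      rw [finsetSum_coeff]
      refine Finset.sum_eq_zero fun j hj => ?_
      rw [coeff_C_mul, coeff_X_pow, if_neg, mul_zero]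
      have : p ^ (j + 1) < p ^ (n + 1) :=
        Nat.pow_lt_pow_right hp.one_lt (by simpa using hj)
      omega
  have hd : (X ^ p ^ (n + 1) + q).degree ≠ 0 := by
    rw [degree_add_eq_left_of_degree_lt (by rwa [degree_X_pow]), degree_X_pow]
    exact_mod_cast (pow_pos hp.pos _).ne'
  obtain ⟨Y, hY⟩ := IsAlgClosed.exists_root _ hd
  refine ⟨Y, ?_⟩
  simp only [IsRoot, q, eval_add, eval_sub, eval_pow, eval_X, eval_one, eval_finsetSum, eval_mul,
    eval_C] at hY
  simp only [mul_pow]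
  linear_combination hY

theorem lang {Ω V : Type} [Field Ω] [IsAlgClosed Ω] (p : ℕ) [Fact p.Prime] [CharP Ω p]
    [AddCommGroup V] [Module Ω V] [FiniteDimensional Ω V] (ψ : V →+ V)
    (hψ : ∀ (c : Ω) v, ψ (c ^ p • v) = c • ψ v) (b : V) : ∃ z, ψ z - z = b := by
  classical
  let ρ : Ω ≃+* Ω := (frobeniusEquiv Ω p).symm
  have hρ : ∀ c, ρ c ^ p = c := fun c => frobeniusEquiv_symm_pow_p Ω p c
  have hψ' : ∀ (c : Ω) v, ψ (c • v) = ρ c • ψ v := fun c v => by rw [← hψ, hρ]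
  let f : ℕ → V := fun i => ψ^[i] b
  have hf : ∀ i, ψ (f i) = f (i + 1) := fun i => (Function.iterate_succ_apply' ψ i b).symm
  obtain ⟨n, α, hα⟩ : ∃ (n : ℕ) (α : ℕ → Ω), f n = ∑ i ∈ Finset.range n, α i • f i := by
    let F : ℕ →o Submodule Ω V :=
      ⟨fun n => Submodule.span Ω (f '' (Finset.range n : Finset ℕ)), fun a b h =>
        Submodule.span_mono (Set.image_mono (by simpa using h))⟩
    obtain ⟨n, hn⟩ := monotone_stabilizes_iff_noetherian.2 (inferInstance : IsNoetherian Ω V) F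
    have h1 : f n ∈ F (n + 1) := Submodule.subset_span ⟨n, by simp, rfl⟩
    rw [← hn (n+1) (Nat.le_succ n)] at h1
    have h2 := (Submodule.mem_span_image_finset_iff_exists_fun Ω).1 h1
    obtain ⟨c, hc⟩ := h2
    refine ⟨n, fun i => if h : i ∈ Finset.range n then c ⟨i, h⟩ else 0, ?_⟩
    rw [← hc, ← Finset.sum_coe_sort (Finset.range n)]
    exact Finset.sum_congr rfl fun i _ => by
      show c i • _ = (dite _ _ _) • _
      rw [dif_pos i.2]
  obtain ⟨Y, hY⟩ := exists_lang_root p n α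
  let y : ℕ → Ω := fun i => Nat.rec (-1) (fun i yi => ρ yi + α i * Y) i
  have y0 : y 0 = -1 := rfl
  have ys : ∀ i, y (i + 1) = ρ (y i) + α i * Y := fun i => rfl
  have hy : ∀ i, y i ^ p ^ i = (∑ j ∈ Finset.range i, (α j * Y) ^ p ^ (j + 1)) - 1 := by
    intro i
    induction i with
    | zero => simp [y0]
    | succ i ih =>
      rw [ys, add_pow_char_pow, Finset.sum_range_succ, pow_succ' p i, pow_mul, hρ, ih]
      ring
  have hyn : ρ (y n) = Y := by
    have : y n ^ p ^ n = (Y ^ p) ^ p ^ n := by rw [hy, ← hY, ← pow_mul, pow_succ']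
    have h2 : y n = Y ^ p := iterateFrobenius_inj Ω p n (by simpa [iterateFrobenius_def] using this)
    have h3 : ρ (y n) ^ p = Y ^ p := by rw [hρ, h2]
    exact frobenius_inj Ω p h3
  refine ⟨∑ i ∈ Finset.range n, y (i + 1) • f i, ?_⟩
  have e1 : ψ (∑ i ∈ Finset.range n, y (i + 1) • f i) =
      ∑ i ∈ Finset.range n, ρ (y (i + 1)) • f (i + 1) := by
    rw [map_sum]
    exact Finset.sum_congr rfl fun i _ => by rw [hψ', hf]
  have e2 := Finset.sum_range_succ (fun i => ρ (y i) • f i) n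
  rw [Finset.sum_range_succ'] at e2
  have e3 : ρ (y 0) • f 0 = - b := by simp [y0, f]
  have e4 : ∑ i ∈ Finset.range n, y (i + 1) • f i =
      ∑ i ∈ Finset.range n, ρ (y i) • f i + ρ (y n) • f n := by
    rw [hyn, hα, Finset.smul_sum, ← Finset.sum_add_distrib]
    refine Finset.sum_congr rfl fun i _ => ?_
    rw [ys, add_smul, smul_smul, mul_comm Y]
  rw [e1, e4, ← e2, e3]
  abel


theorem integral_of_frob {A Ω : Type} [CommRing A] [Field Ω] [Algebra A Ω] {p m : ℕ}
    (hp : 2 ≤ p) (c : Fin m → Fin m → A) (t : Fin m → Ω)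
    (h : ∀ j, t j ^ p = ∑ i, c i j • t i) (j : Fin m) : IsIntegral A (t j) := by
  by_contra hj
  have : IsIntegrallyClosedIn (integralClosure A Ω).toSubring Ω :=
    inferInstanceAs (IsIntegrallyClosedIn (integralClosure A Ω) Ω)
  obtain ⟨V, hV, hjV⟩ := Subring.exists_le_valuationSubring_of_isIntegrallyClosedIn
    (R := (integralClosure A Ω).toSubring) (x := t j) hj
  obtain ⟨i, -, hi⟩ := Finset.exists_max_image Finset.univ (fun i => V.valuation (t i))
    ⟨j, Finset.mem_univ j⟩
  have h1 : 1 < V.valuation (t i) := by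
    refine lt_of_lt_of_le ?_ (hi j (Finset.mem_univ j))
    rw [← not_le, V.valuation_le_one_iff]
    exact hjV
  have h2 : V.valuation (t i ^ p) ≤ V.valuation (t i) := by
    rw [h i]
    refine Valuation.map_sum_le _ fun k _ => ?_
    rw [Algebra.smul_def, map_mul]
    have : V.valuation (algebraMap A Ω (c k i)) ≤ 1 := by
      rw [V.valuation_le_one_iff]
      exact hV (algebraMap_mem (integralClosure A Ω) _)
    exact (mul_le_of_le_one_left' this).trans (hi k (Finset.mem_univ k))
  rw [map_pow] at h2
  have h3 : V.valuation (t i) ^ 1 < V.valuation (t i) ^ p := pow_lt_pow_right₀ h1 (by omega)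
  rw [pow_one] at h3
  exact absurd h2 (not_le.2 h3)

theorem lang_affine {Ω ι : Type} [Field Ω] [IsAlgClosed Ω] (p : ℕ) [Fact p.Prime] [CharP Ω p]
    {m : ℕ} (G : ι → Fin m → Ω) (v : ι → Ω) (φ : ι → ι) (c : Fin m → Fin m → Ω)
    (hG : ∀ r i, G (φ r) i = ∑ j, c i j * G r j ^ p) (hv : ∀ r, v (φ r) = v r ^ p)
    (t0 : Fin m → Ω) (ht0 : ∀ r, ∑ i, t0 i * G r i = v r) :
    ∃ t : Fin m → Ω, (∀ r, ∑ i, t i * G r i = v r) ∧ ∀ j, t j ^ p = ∑ i, c i j * t i := by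
  let ρ : Ω ≃+* Ω := (frobeniusEquiv Ω p).symm
  have hρ : ∀ c, ρ c ^ p = c := fun c => frobeniusEquiv_symm_pow_p Ω p c
  have hinj : ∀ a b : Ω, a ^ p = b ^ p → a = b := fun a b h => frobenius_inj Ω p h
  let Ψ : (Fin m → Ω) →+ (Fin m → Ω) :=
    { toFun := fun t j => ρ (∑ i, c i j * t i)
      map_zero' := by ext j; simp
      map_add' := fun x y => by
        ext j; simp only [Pi.add_apply, mul_add, Finset.sum_add_distrib, map_add] }
  have hΨ : ∀ t j, Ψ t j = ρ (∑ i, c i j * t i) := fun _ _ => rfl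
  have hΨs : ∀ (a : Ω) t, Ψ (a ^ p • t) = a • Ψ t := by
    intro a t
    ext j
    apply hinj
    rw [Pi.smul_apply, smul_eq_mul, mul_pow, hΨ, hΨ, hρ, hρ, Finset.mul_sum]
    refine Finset.sum_congr rfl fun i _ => ?_
    rw [Pi.smul_apply, smul_eq_mul]; ring
  have key : ∀ t r, (∑ j, Ψ t j * G r j) ^ p = ∑ i, t i * G (φ r) i := by
    intro t r
    rw [sum_pow_char]
    simp only [mul_pow, hΨ, hρ, hG, Finset.sum_mul, Finset.mul_sum]
    rw [Finset.sum_comm]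
    refine Finset.sum_congr rfl fun i _ => Finset.sum_congr rfl fun j _ => ?_
    ring
  let Z : Submodule Ω (Fin m → Ω) :=
    { carrier := {z | ∀ r, ∑ i, z i * G r i = 0}
      zero_mem' := fun r => by simp
      add_mem' := fun {x y} hx hy r => by
        simp only [Pi.add_apply, add_mul, Finset.sum_add_distrib, hx r, hy r, add_zero]
      smul_mem' := fun a x hx r => by
        simp only [Pi.smul_apply, smul_eq_mul, mul_assoc, ← Finset.mul_sum, hx r, mul_zero] }
  have hZ : ∀ z, z ∈ Z ↔ ∀ r, ∑ i, z i * G r i = 0 := fun _ => Iff.rfl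
  have hΨZ : ∀ z ∈ Z, Ψ z ∈ Z := by
    intro z hz r
    apply hinj
    rw [key, hz (φ r), zero_pow (Fact.out : p.Prime).ne_zero]
  let ψ : Z →+ Z :=
    { toFun := fun z => ⟨Ψ z, hΨZ z z.2⟩
      map_zero' := by ext1; simp
      map_add' := fun x y => by ext1; simp }
  have hb : t0 - Ψ t0 ∈ Z := by
    intro r
    have : ∑ i, Ψ t0 i * G r i = v r := by
      apply hinj
      rw [key, ht0, hv]
    simp only [Pi.sub_apply, sub_mul, Finset.sum_sub_distrib, this, ht0, sub_self]
  obtain ⟨z, hz⟩ := lang p ψ (fun a z => by ext1; exact hΨs a z) ⟨_, hb⟩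
  have hz' : Ψ z - z = t0 - Ψ t0 := congrArg Subtype.val hz
  have hfix : Ψ (t0 + z) = t0 + z := by
    rw [map_add]
    linear_combination (exp := 1) hz'
  refine ⟨t0 + z, fun r => ?_, fun j => ?_⟩
  · simp only [Pi.add_apply, add_mul, Finset.sum_add_distrib, ht0, z.2 r, add_zero]
  · conv_lhs => rw [← hfix]
    rw [hΨ, hρ]


theorem step3 {p : ℕ} [Fact p.Prime] {A Rr : Type} [CommRing A] [CharP A p] (hC : PropC p A)
    [CommRing Rr] [CharP Rr p] [Algebra A Rr] [Module.Finite A Rr] {m : ℕ}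
    (g : Fin m → (Rr →ₗ[A] A))
    (hst : ∀ i (θ : A →+ A), IsCart p θ → ∀ h : Rr →ₗ[A] A, (∀ r, h r = θ (g i (r ^ p))) →
      h ∈ Submodule.span A (Set.range g)) :
    ∃ c : Fin m → Fin m → A, ∀ i r, g i (r ^ p) = ∑ j, c i j * g j r ^ p := by
  suffices ∀ i, ∃ c : Fin m → A, ∀ r, g i (r ^ p) = ∑ j, c j * g j r ^ p by
    choose c hc using this
    exact ⟨c, hc⟩
  intro i
  obtain ⟨l, s, hs⟩ := Module.Finite.exists_fin (R := A) (M := Rr)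
  have h1 := hC l (fun k => g i (s k ^ p))
  have h2 : Submodule.span A {v | ∃ θ : A →+ A, IsCart p θ ∧
      v = fun k => (θ (g i (s k ^ p))) ^ p} ≤
      Submodule.span A (Set.range fun j : Fin m => fun k : Fin l => g j (s k) ^ p) := by
    rw [Submodule.span_le]
    rintro _ ⟨θ, hθ, rfl⟩
    let h : Rr →ₗ[A] A :=
      { toFun := fun r => θ (g i (r ^ p))
        map_add' := fun x y => by simp [add_pow_char]
        map_smul' := fun a x => by
          simp only [smul_pow, map_smul, smul_eq_mul, RingHom.id_apply]
          exact hθ _ _ }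
    obtain ⟨d, hd⟩ := (Submodule.mem_span_range_iff_exists_fun A).1 (hst i θ hθ h fun r => rfl)
    refine (Submodule.mem_span_range_iff_exists_fun A).2 ⟨fun j => d j ^ p, ?_⟩
    ext k
    have : θ (g i (s k ^ p)) = ∑ j, d j * g j (s k) := by
      change h (s k) = _
      rw [← hd]
      simp
    rw [this, sum_pow_char]
    simp [mul_pow]
  obtain ⟨c, hc⟩ := (Submodule.mem_span_range_iff_exists_fun A).1 (h2 h1)
  refine ⟨c, fun r => ?_⟩
  have hr : r ∈ Submodule.span A (Set.range s) := hs ▸ Submodule.mem_top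
  refine Submodule.span_induction (p := fun r _ => g i (r ^ p) = ∑ j, c j * g j r ^ p)
    ?_ ?_ ?_ ?_ hr
  · rintro _ ⟨k, rfl⟩
    have := congrFun hc k
    simp only [Finset.sum_apply, Pi.smul_apply, smul_eq_mul] at this
    exact this.symm
  · simp [(Fact.out : p.Prime).ne_zero]
  · intro x y _ _ hx hy
    rw [add_pow_char, map_add, hx, hy, ← Finset.sum_add_distrib]
    refine Finset.sum_congr rfl fun j _ => ?_
    rw [map_add, add_pow_char, mul_add]
  · intro a x _ hx
    rw [smul_pow, map_smul, hx, smul_eq_mul, Finset.mul_sum]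
    refine Finset.sum_congr rfl fun j _ => ?_
    rw [map_smul, smul_eq_mul]
    ring

section
variable {p : ℕ} [Fact p.Prime] {A : Type} [CommRing A] {Ω : Type} [Field Ω] [Algebra A Ω]

theorem JT_mono {I J : Ideal A} (h : I ≤ J) : JT A Ω I ≤ JT A Ω J :=
  Submodule.smul_mono h le_rfl

theorem JT_mul {J : Ideal A} {v s : Ω} (hv : v ∈ JT A Ω J) (hs : IsIntegral A s) :
    s * v ∈ JT A Ω J := by
  refine Submodule.smul_induction_on hv ?_ ?_
  · intro r hr n hn
    rw [mul_smul_comm]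
    exact Submodule.smul_mem_smul hr (hs.mul hn)
  · intro x y hx hy
    rw [mul_add]
    exact add_mem hx hy

theorem JT_pow [CharP Ω p] {J : Ideal A} {v : Ω} (hv : v ∈ JT A Ω J) (e : ℕ) :
    v ^ p ^ e ∈ JT A Ω (fp p J e) := by
  refine Submodule.smul_induction_on hv ?_ ?_
  · intro r hr n hn
    rw [smul_pow]
    exact Submodule.smul_mem_smul (pow_mem_fp hr e) (IsIntegral.pow hn _)
  · intro x y hx hy
    rw [add_pow_char_pow]
    exact add_mem hx hy

theorem fp_sup [CharP A p] (I J : Ideal A) (e : ℕ) : fp p (I ⊔ J) e ≤ fp p I e ⊔ J := by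
  refine Ideal.span_le.2 ?_
  rintro _ ⟨x, hx, rfl⟩
  obtain ⟨a, ha, b, hb, rfl⟩ := Submodule.mem_sup.1 hx
  simp only [SetLike.mem_coe]
  rw [add_pow_char_pow]
  exact Submodule.add_mem_sup (pow_mem_fp ha e)
    (Ideal.pow_mem_of_mem _ hb _ (pow_pos (Fact.out : p.Prime).pos _))

theorem JT_root [IsAlgClosed Ω] [CharP Ω p] {J : Ideal A} {e : ℕ} {x : Ω}
    (hx : x ∈ JT A Ω (fp p J e)) : ∃ y ∈ JT A Ω J, y ^ p ^ e = x := by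
  have hq : p ^ e ≠ 0 := pow_ne_zero _ (Fact.out : p.Prime).ne_zero
  have hadd : ∀ x y : Ω, (∃ z ∈ JT A Ω J, z ^ p ^ e = x) → (∃ z ∈ JT A Ω J, z ^ p ^ e = y) →
      (∃ z ∈ JT A Ω J, z ^ p ^ e = x + y) := by
    rintro _ _ ⟨x, hx, rfl⟩ ⟨y, hy, rfl⟩
    exact ⟨x + y, add_mem hx hy, add_pow_char_pow _ _ _ _⟩
  refine Submodule.smul_induction_on hx ?_ hadd
  intro r hr
  refine Submodule.span_induction (p := fun r _ => ∀ n ∈ Subalgebra.toSubmodule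
    (integralClosure A Ω), ∃ y ∈ JT A Ω J, y ^ p ^ e = r • n) ?_ ?_ ?_ ?_ hr
  · rintro _ ⟨j, hj, rfl⟩ n hn
    obtain ⟨z, hz⟩ := IsAlgClosed.exists_pow_nat_eq n (Nat.pos_of_ne_zero hq)
    refine ⟨j • z, Submodule.smul_mem_smul hj ?_, by rw [smul_pow, hz]⟩
    refine IsIntegral.of_pow (Nat.pos_of_ne_zero hq) ?_
    rw [hz]; exact hn
  · intro n hn
    exact ⟨0, zero_mem _, by rw [zero_pow hq, zero_smul]⟩
  · intro a b _ _ ha hb n hn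
    rw [add_smul]
    exact hadd _ _ (ha n hn) (hb n hn)
  · intro a b _ hb n hn
    rw [smul_eq_mul, mul_comm, mul_smul]
    exact hb _ (Submodule.smul_mem _ a hn)

theorem krull_sup [IsNoetherianRing A] [IsLocalRing A] {I : Ideal A} {a : A}
    (h : ∀ N, a ∈ I ⊔ maximalIdeal A ^ N) : a ∈ I := by
  rw [← Submodule.Quotient.mk_eq_zero I]
  refine IsHausdorff.haus (I := maximalIdeal A) inferInstance _ fun N => ?_
  rw [SModEq.zero]
  obtain ⟨b, hb, c, hc, rfl⟩ := Submodule.mem_sup.1 (h N)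
  rw [Submodule.Quotient.mk_add, (Submodule.Quotient.mk_eq_zero I).2 hb, zero_add,
    show (Submodule.Quotient.mk c : A ⧸ I) = c • Submodule.Quotient.mk 1 by
      rw [← Submodule.Quotient.mk_smul, smul_eq_mul, mul_one]]
  exact Submodule.smul_mem_smul hc Submodule.mem_top

end


section
variable {p : ℕ} [Fact p.Prime] {A : Type} [CommRing A] [IsDomain A] [IsNoetherianRing A]
  [IsLocalRing A] [CharP A p]
  {K Ω : Type} [Field K] [Algebra A K] [IsFractionRing A K] [Field Ω] [Algebra K Ω]
  [Algebra A Ω] [IsScalarTower A K Ω] [IsAlgClosed Ω] [CharP Ω p]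

open IntermediateField in
theorem M_sep (hC : PropC p A) {I : Ideal A} {w : Ω} (hwi : IsIntegral A w)
    (hws : IsSeparable K w) (hw : ∀ N, w ∈ JT A Ω (I ⊔ maximalIdeal A ^ N)) :
    w ∈ JT A Ω I := by
  have hint : IsIntegrallyClosed A := isInt_of_propC hC
  have hAK := IsFractionRing.injective A K
  obtain ⟨Tr, hTr, n, ε, hε⟩ := exists_trace (p := p) (A := A) hws
  let 𝓡 := Algebra.adjoin A {w}
  have hfin : Module.Finite A 𝓡 := Module.Finite.iff_fg.2 hwi.fg_adjoin_singleton
  have hchar : CharP 𝓡 p := by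
    exact (algebraMap 𝓡 Ω).charP Subtype.val_injective p
  let wR : 𝓡 := ⟨w, Algebra.self_mem_adjoin_singleton A w⟩
  have hRL : ∀ r : 𝓡, (r : Ω) ∈ K⟮w⟯ := by
    intro r
    have : 𝓡 ≤ (K⟮w⟯.toSubalgebra.restrictScalars A) := by
      refine Algebra.adjoin_le ?_
      rintro _ rfl
      exact mem_adjoin_simple_self K _
    exact this r.2
  have hRi : ∀ r : 𝓡, IsIntegral A (r : Ω) := by
    intro r
    have : 𝓡 ≤ integralClosure A Ω := by
      refine Algebra.adjoin_le ?_
      rintro _ rfl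
      exact hwi
    exact this r.2
  let 𝒯 : Submodule A (𝓡 →ₗ[A] A) :=
    { carrier := {f | ∀ e, f (wR ^ p ^ e) ∈ fp p I e}
      zero_mem' := fun e => zero_mem _
      add_mem' := fun {x y} hx hy e => add_mem (hx e) (hy e)
      smul_mem' := fun a x hx e => Ideal.mul_mem_left _ _ (hx e) }
  have h𝒯 : ∀ f, f ∈ 𝒯 ↔ ∀ e, f (wR ^ p ^ e) ∈ fp p I e := fun _ => Iff.rfl
  have hfg : 𝒯.FG := IsNoetherian.noetherian 𝒯
  obtain ⟨m, g, hg⟩ := Submodule.fg_iff_exists_fin_generating_family.1 hfg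
  have hgT : ∀ j, g j ∈ 𝒯 := fun j => hg ▸ Submodule.subset_span ⟨j, rfl⟩
  obtain ⟨c, hc⟩ := step3 hC g (by
    intro i θ hθ h hh
    rw [hg]
    intro e
    rw [hh, ← pow_mul, ← pow_succ]
    exact cart_fp hθ (hgT i (e + 1)))
  -- the trace functionals
  have hτ : ∀ i : ℕ, ∃ τ ∈ 𝒯, ∀ r : 𝓡, algebraMap A K (τ r) = Tr (w ^ i * r) := by
    intro i
    have h1 : ∀ r : 𝓡, ∃ a, algebraMap A K a = Tr (w ^ i * r) := fun r =>
      hTr.int _ (hRL (wR ^ i * r)) (hRi (wR ^ i * r))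
    choose τ hτ using h1
    refine ⟨⟨⟨τ, fun x y => ?_⟩, fun a x => ?_⟩, fun e => ?_, hτ⟩
    · apply hAK
      rw [map_add, hτ, hτ, hτ, ← map_add]
      congr 1
      simp [mul_add]
    · apply hAK
      simp only [RingHom.id_apply, smul_eq_mul]
      rw [map_mul, hτ, hτ, ← smul_eq_mul (algebraMap A K a), ← map_smul, algebraMap_smul]
      congr 1
      simp
    · refine krull_sup fun N => ?_
      have h2 : w ^ i * w ^ p ^ e ∈ JT A Ω (fp p I e ⊔ maximalIdeal A ^ N) :=
        JT_mul (JT_mono (fp_sup _ _ _) (JT_pow (hw N) e)) (hwi.pow i)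
      obtain ⟨a, ha, ha'⟩ := lemB hC hTr (hRL (wR ^ i * wR ^ p ^ e)) h2
      have h3 : τ (wR ^ p ^ e) = a := hAK (by rw [hτ, ha']; rfl)
      rw [← h3] at ha
      exact ha
  choose τ hτT hτ using hτ
  have hd : ∀ i, ∃ d : Fin m → A, ∑ j, d j • g j = τ i := fun i =>
    (Submodule.mem_span_range_iff_exists_fun A).1 (hg.symm ▸ hτT i)
  choose d hd using hd
  obtain ⟨t, ht1, ht2⟩ := lang_affine p (fun (r : 𝓡) j => algebraMap A Ω (g j r))
    (fun r => (r : Ω)) (fun r => r ^ p) (fun i j => algebraMap A Ω (c i j))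
    (fun r i => by
      rw [hc, map_sum]
      exact Finset.sum_congr rfl fun j _ => by rw [map_mul, map_pow])
    (fun r => rfl) (fun j => ∑ i : Fin n, algebraMap A Ω (d i j) * ε i)
    (fun r => by
      rw [hε r (hRL r)]
      simp only [Finset.sum_mul]
      rw [Finset.sum_comm]
      refine Finset.sum_congr rfl fun i _ => ?_
      rw [← hτ, ← hd, algebraMap_smul, Algebra.smul_def, LinearMap.sum_apply, map_sum,
        Finset.sum_mul]
      refine Finset.sum_congr rfl fun j _ => ?_
      rw [LinearMap.smul_apply, smul_eq_mul, map_mul]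
      ring)
  have hti : ∀ j, IsIntegral A (t j) := integral_of_frob (Fact.out : p.Prime).two_le c t
    (fun j => by rw [ht2]; simp only [Algebra.smul_def])
  have hfinal := ht1 wR
  change _ = w at hfinal
  rw [← hfinal]
  refine sum_mem fun j _ => ?_
  rw [mul_comm, ← Algebra.smul_def]
  refine Submodule.smul_mem_smul ?_ (hti j)
  have := hgT j 0
  rw [fp_zero] at this
  simpa using this

theorem M_main [Algebra.IsAlgebraic K Ω] (hC : PropC p A) {I : Ideal A} {u : Ω}
    (hu : ∀ N, u ∈ JT A Ω (I ⊔ maximalIdeal A ^ N)) :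
    u ∈ JT A Ω I := by
  have : CharP K p := (algebraMap K Ω).charP (algebraMap K Ω).injective p
  have : ExpChar (separableClosure K Ω) p := inferInstance
  obtain ⟨e, ⟨w, hw⟩, hwe⟩ := (isPurelyInseparable_iff_pow_mem (separableClosure K Ω) (E := Ω) p).1
    inferInstance u
  change w = _ at hwe
  subst hwe
  have h1 : u ^ p ^ e ∈ JT A Ω (fp p I e) := by
    refine M_sep (K := K) hC ((JT_le_int (hu 0)).pow _) hw fun N => ?_
    exact JT_mono (fp_sup _ _ _) (JT_pow (hu N) e)
  obtain ⟨y, hy, hye⟩ := JT_root h1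
  have : y = u := iterateFrobenius_inj Ω p e (by simpa [iterateFrobenius_def] using hye)
  exact this ▸ hy

end


theorem exists_dual_family {k V : Type} [Field k] [AddCommGroup V] [Module k V] (s : Set V)
    (hs : s.Finite) : ∃ (n : ℕ) (b : Fin n → V) (l : Fin n → (V →ₗ[k] k)),
      ∀ c ∈ s, ∑ i, l i c • b i = c := by
  have : Module.Finite k (Submodule.span k s) := Module.Finite.iff_fg.2 (Submodule.fg_span hs)
  let B := Module.finBasis k (Submodule.span k s)
  have hext : ∀ i, ∃ l : V →ₗ[k] k, l ∘ₗ (Submodule.span k s).subtype = B.coord i := fun i =>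
    LinearMap.exists_extend _
  choose l hl using hext
  refine ⟨_, fun i => (B i : V), l, fun c hc => ?_⟩
  have h1 := congrArg (Submodule.span k s).subtype (B.sum_repr ⟨c, Submodule.subset_span hc⟩)
  rw [map_sum] at h1
  refine Eq.trans (Finset.sum_congr rfl fun i _ => ?_) h1
  rw [map_smul]
  congr 1
  exact LinearMap.congr_fun (hl i) ⟨c, Submodule.subset_span hc⟩

theorem exists_frob_dual (k : Type) [Field k] (p : ℕ) [Fact p.Prime] [CharP k p] (s : Set k)
    (hs : s.Finite) : ∃ (n : ℕ) (b : Fin n → k) (l : Fin n → (k →+ k)),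
      (∀ i, IsCart p (l i)) ∧ ∀ c ∈ s, ∑ i, l i c ^ p * b i = c := by
  obtain ⟨n, b, l, h⟩ := @exists_dual_family k k _ _ (Module.compHom k (frobenius k p)) s hs
  exact ⟨n, b, fun i => (@LinearMap.toAddMonoidHom k k k k _ _ _ _ (_) (_) (_) (l i)),
    fun i a b => @LinearMap.map_smul k k k _ _ _ (_) (_) (l i) a b, h⟩

namespace MvPS
open MvPowerSeries
variable {k : Type} [Field k] {p : ℕ} [Fact p.Prime] [CharP k p] {d : ℕ}

noncomputable def nf (ν : Fin d → Fin p) : Fin d →₀ ℕ :=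
  Finsupp.equivFunOnFinite.symm (fun i => (ν i : ℕ))

theorem nf_apply (ν : Fin d → Fin p) (i) : nf ν i = ν i := rfl

theorem coeff_pow_smul (f : MvPowerSeries (Fin d) k) (x : Fin d →₀ ℕ) :
    coeff (p • x) (f ^ p) = coeff x f ^ p := by
  rw [← map_frobenius_expand p (Fact.out : p.Prime).ne_zero, coeff_map, coeff_expand_smul]; rfl

theorem coeff_pow_of_not (f : MvPowerSeries (Fin d) k) (x : Fin d →₀ ℕ)
    (h : ¬ ∃ y, x = p • y) : coeff x (f ^ p) = 0 := by
  rw [← map_frobenius_expand p (Fact.out : p.Prime).ne_zero, coeff_map]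
  obtain ⟨i, hi⟩ : ∃ i, ¬ p ∣ x i := by
    by_contra! hcon
    refine h ⟨x.mapRange (· / p) (Nat.zero_div p), ?_⟩
    ext i
    simp [Nat.mul_div_cancel' (hcon i)]
  rw [coeff_expand_of_not_dvd _ _ _ hi, map_zero]

theorem coeff_pow_mul (f b : MvPowerSeries (Fin d) k) (μ : Fin d →₀ ℕ) (ν : Fin d → Fin p) :
    coeff (p • μ + nf ν) (f ^ p * b) =
      ∑ xy ∈ Finset.HasAntidiagonal.antidiagonal μ, coeff xy.1 f ^ p * coeff (p • xy.2 + nf ν) b := by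
  classical
  have hp := (Fact.out : p.Prime)
  rw [coeff_mul]
  symm
  refine Finset.sum_of_injOn (fun xy => (p • xy.1, p • xy.2 + nf ν)) ?_ ?_ ?_ ?_
  · rintro ⟨x, y⟩ _ ⟨x', y'⟩ _ h
    simp only [Prod.mk.injEq, add_left_inj] at h
    have hinj : ∀ a b : Fin d →₀ ℕ, p • a = p • b → a = b := fun a b h => by
      ext i
      have := DFunLike.congr_fun h i
      simpa [hp.ne_zero] using this
    rw [hinj _ _ h.1, hinj _ _ h.2]
  · rintro ⟨x, y⟩ h
    simp only [Finset.mem_coe, Finset.HasAntidiagonal.mem_antidiagonal] at h ⊢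
    rw [← h, smul_add, add_assoc]
  · rintro ⟨x, y⟩ h hn
    simp only [Finset.HasAntidiagonal.mem_antidiagonal] at h
    simp only
    rw [coeff_pow_of_not, zero_mul]
    rintro ⟨x', rfl⟩
    apply hn
    have hle : x' ≤ μ := by
      intro i
      have h1 := DFunLike.congr_fun h i
      simp only [Finsupp.add_apply, Finsupp.smul_apply, smul_eq_mul, nf_apply] at h1
      have h2 := (ν i).2
      by_contra hcon
      have h3 : p * (μ i + 1) ≤ p * x' i := Nat.mul_le_mul_left _ (by omega)
      rw [mul_add] at h3
      omega
    refine ⟨(x', μ - x'), ?_, ?_⟩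
    · simp [hle]
    · simp only [Prod.mk.injEq, true_and]
      have : p • μ = p • x' + p • (μ - x') := by rw [← smul_add, add_tsub_cancel_of_le hle]
      rw [this, add_assoc] at h
      exact (add_left_cancel h).symm
  · rintro ⟨x, y⟩ _
    simp only [coeff_pow_smul]

/-- The Cartier-type maps on power series. -/
noncomputable def theta (l : k →+ k) (ν : Fin d → Fin p) :
    MvPowerSeries (Fin d) k →+ MvPowerSeries (Fin d) k where
  toFun a := fun μ => l (coeff (p • μ + nf ν) a)
  map_zero' := by
    funext μ
    change l (coeff (p • μ + nf ν) (0 : MvPowerSeries (Fin d) k)) = 0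
    rw [map_zero, map_zero]
  map_add' x y := by
    funext μ
    change l (coeff (p • μ + nf ν) (x + y)) =
      l (coeff (p • μ + nf ν) x) + l (coeff (p • μ + nf ν) y)
    rw [map_add, map_add]

theorem coeff_theta (l : k →+ k) (ν : Fin d → Fin p) (a) (μ) :
    coeff μ (theta l ν a) = l (coeff (p • μ + nf ν) a) := rfl

theorem theta_cart {l : k →+ k} (hl : IsCart p l) (ν : Fin d → Fin p) :
    IsCart p (theta l ν) := by
  intro a b
  ext μ
  rw [coeff_theta, coeff_pow_mul, map_sum, coeff_mul]
  exact Finset.sum_congr rfl fun xy _ => by rw [hl, coeff_theta]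

theorem exists_rep (κ : Fin d →₀ ℕ) : ∃ (μ : Fin d →₀ ℕ) (ν : Fin d → Fin p), κ = p • μ + nf ν := by
  have hp := (Fact.out : p.Prime)
  refine ⟨κ.mapRange (· / p) (Nat.zero_div p), fun i => ⟨κ i % p, Nat.mod_lt _ hp.pos⟩, ?_⟩
  ext i
  simp [nf_apply, Nat.div_add_mod]

theorem coeff_pow_mul_monomial (f : MvPowerSeries (Fin d) k) (μ : Fin d →₀ ℕ)
    (ν ν' : Fin d → Fin p) (c : k) :
    coeff (p • μ + nf ν) (f ^ p * monomial (nf ν') c) =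
      if ν = ν' then coeff μ f ^ p * c else 0 := by
  classical
  have hp := (Fact.out : p.Prime)
  have key : ∀ y, p • y + nf ν = nf ν' ↔ y = 0 ∧ ν = ν' := by
    intro y
    constructor
    · intro h
      have h1 : ∀ i, y i = 0 ∧ ν i = ν' i := by
        intro i
        have h1 := DFunLike.congr_fun h i
        simp only [Finsupp.add_apply, Finsupp.smul_apply, smul_eq_mul, nf_apply] at h1
        have h2 := (ν' i).2
        have h3 : y i = 0 := by
          by_contra h0
          have : p * 1 ≤ p * y i := Nat.mul_le_mul_left _ (by omega)
          omega
        refine ⟨h3, ?_⟩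
        rw [h3] at h1
        ext
        simpa using h1
      exact ⟨by ext i; exact (h1 i).1, by ext1 i; exact (h1 i).2⟩
    · rintro ⟨rfl, rfl⟩; simp
  rw [coeff_pow_mul]
  simp only [coeff_monomial, key]
  split_ifs with h
  · rw [Finset.sum_eq_single (μ, 0)]
    · simp [h]
    · rintro ⟨x, y⟩ hxy hne
      rw [if_neg, mul_zero]
      rintro ⟨h0, -⟩
      simp only at h0
      subst h0
      simp only [Finset.HasAntidiagonal.mem_antidiagonal, add_zero] at hxy
      exact hne (by rw [hxy])
    · intro h; simp at h
  · simp [h]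

theorem mem_pow_of_coeff {n : ℕ} {f : MvPowerSeries (Fin d) k}
    (h : ∀ x, Finsupp.degree x < n → coeff x f = 0) :
    f ∈ Ideal.span (Set.range (X : Fin d → MvPowerSeries (Fin d) k)) ^ n := by
  let E := toAdicCompletionAlgEquiv (Fin d) k
  have h0 : E f ∈ (AdicCompletion.eval (MvPolynomial.idealOfVars (Fin d) k)
      (MvPolynomial (Fin d) k) n).ker := by
    rw [LinearMap.mem_ker]
    change (toAdicCompletion (Fin d) k f).val n = 0
    rw [toAdicCompletion_apply_eq_mk_truncTotal]
    have : truncTotal n f = 0 := by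
      ext x
      by_cases hx : Finsupp.degree x < n
      · rw [coeff_truncTotal _ hx, h x hx]; simp
      · rw [coeff_truncTotal_eq_zero _ (not_lt.1 hx)]; simp
    rw [this]
    simp
  rw [← AdicCompletion.pow_smul_top_eq_ker_eval (MvPolynomial.idealOfVars_fg _ _)] at h0
  have h1 : ∀ z ∈ (MvPolynomial.idealOfVars (Fin d) k ^ n) • (⊤ : Submodule
      (MvPolynomial (Fin d) k) (AdicCompletion (MvPolynomial.idealOfVars (Fin d) k)
      (MvPolynomial (Fin d) k))), E.symm z ∈
      Ideal.span (Set.range (X : Fin d → MvPowerSeries (Fin d) k)) ^ n := by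
    intro z hz
    refine Submodule.smul_induction_on hz ?_ ?_
    · intro r hr y _
      rw [map_smul, Algebra.smul_def]
      refine Ideal.mul_mem_right _ _ ?_
      have h2 := Ideal.mem_map_of_mem (algebraMap _ (MvPowerSeries (Fin d) k)) hr
      rw [Ideal.map_pow] at h2
      refine Ideal.pow_right_mono ?_ n h2
      rw [MvPolynomial.idealOfVars, Ideal.map_span, Ideal.span_le]
      rintro _ ⟨_, ⟨i, rfl⟩, rfl⟩
      refine Ideal.subset_span ⟨i, ?_⟩
      simp [MvPowerSeries.algebraMap_apply']
    · intro x y hx hy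
      rw [map_add]
      exact add_mem hx hy
  simpa using h1 _ h0

theorem propC : PropC p (MvPowerSeries (Fin d) k) := by
  classical
  intro l a
  set S := Submodule.span (MvPowerSeries (Fin d) k) {v : Fin l → MvPowerSeries (Fin d) k |
    ∃ θ : MvPowerSeries (Fin d) k →+ MvPowerSeries (Fin d) k,
      IsCart p θ ∧ v = fun i => (θ (a i)) ^ p} with hS
  have hH : IsHausdorff (maximalIdeal (MvPowerSeries (Fin d) k))
    ((Fin l → MvPowerSeries (Fin d) k) ⧸ S) := inferInstance
  rw [← Submodule.Quotient.mk_eq_zero]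
  refine hH.haus' _ fun t => ?_
  rw [SModEq.zero]
  let s : Set k := ⋃ j : Fin l, (fun x => coeff x (a j)) '' {x : Fin d →₀ ℕ | Finsupp.degree x < t}
  have hs : s.Finite := by
    refine Set.finite_iUnion fun j => Set.Finite.image _ ?_
    exact Finsupp.finite_of_degree_lt t
  obtain ⟨n, b, L, hL, hsum⟩ := exists_frob_dual k p s hs
  let w : Fin l → MvPowerSeries (Fin d) k :=
    ∑ i, ∑ ν : Fin d → Fin p, (monomial (nf ν) (b i)) • (fun j => (theta (L i) ν (a j)) ^ p)
  have hw : w ∈ S := Submodule.sum_mem _ fun i _ => Submodule.sum_mem _ fun ν _ =>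
    Submodule.smul_mem _ _ (Submodule.subset_span ⟨_, theta_cart (hL i) ν, rfl⟩)
  have hco : ∀ j, (a - w) j ∈ maximalIdeal (MvPowerSeries (Fin d) k) ^ t := by
    intro j
    refine Ideal.pow_right_mono ?_ t (mem_pow_of_coeff (n := t) ?_)
    · rw [Ideal.span_le]
      rintro _ ⟨i, rfl⟩
      rw [SetLike.mem_coe, mem_maximalIdeal, mem_nonunits_iff, MvPowerSeries.isUnit_iff_constantCoeff]
      simp
    · intro x hx
      obtain ⟨μ, ν, rfl⟩ := exists_rep (p := p) x
      rw [Pi.sub_apply, map_sub, sub_eq_zero]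
      have h1 := hsum (coeff (p • μ + nf ν) (a j)) (Set.mem_iUnion.2 ⟨j, _, hx, rfl⟩)
      simp only [w, Finset.sum_apply, Pi.smul_apply, smul_eq_mul, map_sum]
      rw [← h1]
      refine Finset.sum_congr rfl fun i _ => ?_
      rw [Finset.sum_eq_single ν]
      · rw [mul_comm (monomial _ _), coeff_pow_mul_monomial, if_pos rfl, coeff_theta]
      · intro ν' _ hne
        rw [mul_comm (monomial _ _), coeff_pow_mul_monomial, if_neg hne.symm]
      · simp
  have h2 : (Submodule.Quotient.mk a : (Fin l → MvPowerSeries (Fin d) k) ⧸ S) =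
      S.mkQ (a - w) := by
    rw [map_sub, Submodule.mkQ_apply, Submodule.mkQ_apply, (Submodule.Quotient.mk_eq_zero S).2 hw, sub_zero]
  rw [h2, pi_eq_sum_univ' (a - w), map_sum]
  refine Submodule.sum_mem _ fun j _ => ?_
  rw [map_smul]
  exact Submodule.smul_mem_smul (hco j) trivial

end MvPS


theorem h1_iff (F L : Type) [Field F] [Field L] [Algebra F L] :
    Subsingleton (Algebra.H1Cotangent F L) ↔ ∀ x : MvPolynomial L F,
      MvPolynomial.aeval (id : L → L) x = 0 →
      (∀ i, MvPolynomial.aeval (id : L → L) (MvPolynomial.pderiv i x) = 0) →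
      x ∈ RingHom.ker (MvPolynomial.aeval (R := F) (id : L → L)) ^ 2 := by
  let G := Algebra.Generators.self F L
  have hker : G.toExtension.ker = RingHom.ker (MvPolynomial.aeval (R := F) (id : L → L)) := by
    rw [← Algebra.Generators.ker, Algebra.Generators.ker_eq_ker_aeval_val]; rfl
  constructor
  · intro hsub x hx hd
    have hxk : x ∈ G.toExtension.ker := by rw [hker]; exact hx
    have h1 : G.toExtension.cotangentComplex (.mk ⟨x, hxk⟩) = 0 := by
      rw [Algebra.Extension.cotangentComplex_mk]
      apply G.cotangentSpaceBasis.repr.injective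
      ext i
      rw [map_zero]
      erw [Algebra.Generators.cotangentSpaceBasis_repr_one_tmul]
      exact hd i
    have h2 : (⟨.mk ⟨x, hxk⟩, h1⟩ : G.toExtension.H1Cotangent) = 0 :=
      @Subsingleton.elim _ hsub _ _
    have h3 := congrArg Subtype.val h2
    have h4 : x ∈ G.toExtension.ker ^ 2 := (Algebra.Extension.Cotangent.mk_eq_zero_iff _).1 h3
    rw [hker] at h4
    exact h4
  · intro H
    refine subsingleton_of_forall_eq 0 ?_
    rintro ⟨z, hz⟩
    obtain ⟨⟨x, hxk⟩, rfl⟩ := Algebra.Extension.Cotangent.mk_surjective z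
    apply Subtype.ext
    refine (Algebra.Extension.Cotangent.mk_eq_zero_iff _).2 ?_
    have hxk' := hxk
    change x ∈ (Algebra.Generators.self F L).toExtension.ker ^ 2
    rw [show (Algebra.Generators.self F L).toExtension.ker = _ from hker] at hxk' ⊢
    refine H x hxk' fun i => ?_
    have h1 : G.toExtension.cotangentComplex (.mk ⟨x, hxk⟩) = 0 := hz
    rw [Algebra.Extension.cotangentComplex_mk] at h1
    have h2 := DFunLike.congr_fun (congrArg G.cotangentSpaceBasis.repr h1) i
    erw [Algebra.Generators.cotangentSpaceBasis_repr_one_tmul] at h2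
    rw [map_zero] at h2
    exact h2

theorem formallySmooth_of_perfect (F L : Type) [Field F] [PerfectField F] [Field L]
    [Algebra F L] : Algebra.FormallySmooth F L := by
  rw [Algebra.formallySmooth_iff]
  refine ⟨inferInstance, (h1_iff F L).2 ?_⟩
  intro x hx hd
  classical
  let L0 := IntermediateField.adjoin F (x.vars : Set L)
  have : Algebra.EssFiniteType F L0 :=
    IntermediateField.essFiniteType_iff.2 (IntermediateField.fg_adjoin_finset x.vars)
  have hs : Algebra.FormallySmooth F L0 := inferInstance
  have h0 := (h1_iff F L0).1 ((Algebra.formallySmooth_iff _ _).1 hs).2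
  obtain ⟨y, hy⟩ : ∃ y : MvPolynomial L0 F, MvPolynomial.rename (Subtype.val) y = x := by
    refine MvPolynomial.exists_rename_eq_of_vars_subset_range _ _ Subtype.val_injective ?_
    intro i hi
    exact ⟨⟨i, IntermediateField.subset_adjoin F _ hi⟩, rfl⟩
  have hcomp : ∀ z : MvPolynomial L0 F, MvPolynomial.aeval (id : L → L)
      (MvPolynomial.rename Subtype.val z) = ((MvPolynomial.aeval (id : L0 → L0) z : L0) : L) := by
    intro z
    rw [MvPolynomial.aeval_rename]
    have : (L0.val.comp (MvPolynomial.aeval (id : L0 → L0))) =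
      MvPolynomial.aeval (id ∘ Subtype.val) := by
      ext i; simp
    exact (DFunLike.congr_fun this z).symm
  have h1 := h0 y (by rw [← hy, hcomp] at hx; exact_mod_cast hx) (fun i => by
    have := hd (i : L)
    rw [← hy, MvPolynomial.pderiv_rename Subtype.val_injective, hcomp] at this
    exact_mod_cast this)
  have h2 := Ideal.mem_map_of_mem (MvPolynomial.rename (R := F) (Subtype.val : L0 → L)).toRingHom h1
  rw [Ideal.map_pow] at h2
  rw [← hy]
  refine Ideal.pow_right_mono ?_ 2 h2
  rw [Ideal.map_le_iff_le_comap]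
  intro z hz
  rw [Ideal.mem_comap, RingHom.mem_ker]
  refine (hcomp z).trans ?_
  rw [RingHom.mem_ker] at hz
  rw [hz]; rfl

/-- Coefficient fields exist. -/
theorem exists_coeff_field (R : Type) [CommRing R] [IsLocalRing R]
    [IsAdicComplete (maximalIdeal R) R] (p : ℕ) [Fact p.Prime] [CharP R p] :
    ∃ σ : ResidueField R →+* R, ∀ a, residue R (σ a) = a := by
  let _ : Algebra (ZMod p) R := ZMod.algebra R p
  have hfs : Algebra.FormallySmooth (ZMod p) (R ⧸ maximalIdeal R) :=
    formallySmooth_of_perfect (ZMod p) (ResidueField R)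
  obtain ⟨g, hg⟩ := Algebra.FormallySmooth.exists_mkₐ_comp_eq_of_isAdicComplete (R := ZMod p)
    (A := R ⧸ maximalIdeal R) (S := R) (I := maximalIdeal R) (AlgHom.id _ _)
  exact ⟨g.toRingHom, fun a => DFunLike.congr_fun hg a⟩


theorem precomplete_of_finite {A M : Type} [CommRing A] (I : Ideal A) [IsAdicComplete I A]
    [AddCommGroup M] [Module A M] [Module.Finite A M] : IsPrecomplete I M := by
  rw [← AdicCompletion.of_surjective_iff]
  intro z
  obtain ⟨t, rfl⟩ := AdicCompletion.ofTensorProduct_surjective_of_finite I M z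
  induction t with
  | zero => exact ⟨0, by simp⟩
  | add x y hx hy =>
    obtain ⟨a, ha⟩ := hx
    obtain ⟨b, hb⟩ := hy
    exact ⟨a + b, by rw [map_add, map_add, ha, hb]⟩
  | tmul r x =>
    obtain ⟨s, rfl⟩ := AdicCompletion.of_surjective I A r
    refine ⟨s • x, ?_⟩
    rw [AdicCompletion.ofTensorProduct_tmul]
    ext n
    rw [AdicCompletion.smul_eval]
    rfl

theorem ideal_le_span {A R : Type} [CommRing A] [CommRing R] [IsLocalRing R] [Algebra A R]
    (hsurj : ∀ r : R, ∃ a : A, r - algebraMap A R a ∈ maximalIdeal R) (s : Set R) :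
    (Ideal.span s).restrictScalars A ≤
      Submodule.span A s ⊔ (maximalIdeal R * Ideal.span s).restrictScalars A := by
  intro x hx
  rw [Submodule.restrictScalars_mem] at hx
  induction hx using Submodule.span_induction with
  | mem x h => exact Submodule.mem_sup_left (Submodule.subset_span h)
  | zero => exact zero_mem _
  | add x y _ _ hx hy => exact add_mem hx hy
  | smul r x hx' hx =>
    obtain ⟨a, ha⟩ := hsurj r
    have : r • x = a • x + (r - algebraMap A R a) * x := by
      rw [Algebra.smul_def a, smul_eq_mul]; ring
    rw [this]
    exact add_mem (Submodule.smul_mem _ _ hx)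
      (Submodule.mem_sup_right (Ideal.mul_mem_mul ha hx'))

theorem exists_span_sup {A R : Type} [CommRing A] [CommRing R] [IsLocalRing R] [Algebra A R]
    [IsNoetherianRing R]
    (hsurj : ∀ r : R, ∃ a : A, r - algebraMap A R a ∈ maximalIdeal R) (n : ℕ) :
    ∃ s : Finset R, Submodule.span A (s : Set R) ⊔ (maximalIdeal R ^ n).restrictScalars A = ⊤ := by
  classical
  induction n with
  | zero => exact ⟨∅, by simp⟩
  | succ n ih =>
    obtain ⟨s, hs⟩ := ih
    obtain ⟨g, hg⟩ := IsNoetherian.noetherian (maximalIdeal R ^ n)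
    refine ⟨s ∪ g, ?_⟩
    rw [eq_top_iff, ← hs]
    refine sup_le (le_sup_of_le_left (Submodule.span_mono (by simp))) ?_
    have := ideal_le_span hsurj (g : Set R)
    rw [show Ideal.span (g : Set R) = _ from hg, ← pow_succ'] at this
    exact this.trans (sup_le_sup_right (Submodule.span_mono (by simp)) _)

theorem finite_of_complete {A R : Type} [CommRing A] [CommRing R] [IsLocalRing R] [Algebra A R]
    [IsNoetherianRing R] (I : Ideal A) [IsAdicComplete I A] 
    (hsurj : ∀ r : R, ∃ a : A, r - algebraMap A R a ∈ maximalIdeal R)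
    (hI : I.map (algebraMap A R) ≠ ⊤)
    (hn : ∃ n, maximalIdeal R ^ n ≤ I.map (algebraMap A R)) : Module.Finite A R := by
  obtain ⟨n, hn⟩ := hn
  obtain ⟨s, hs⟩ := exists_span_sup hsurj n
  have hH : IsHausdorff I R := IsHausdorff.map_algebraMap_iff.1
    (IsHausdorff.of_isLocalRing (I.map (algebraMap A R)) R hI)
  let f : (s → A) →ₗ[A] R := Fintype.linearCombination A (fun i : s => (i : R))
  have hP : IsPrecomplete I (s → A) := precomplete_of_finite I
  have hf : Function.Surjective f := by
    refine surjective_of_mkQ_comp_surjective (I := I) ?_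
    intro y
    obtain ⟨r, rfl⟩ := Submodule.mkQ_surjective _ y
    have hr : r ∈ Submodule.span A (s : Set R) ⊔ (maximalIdeal R ^ n).restrictScalars A := by
      rw [hs]; trivial
    obtain ⟨u, hu, v, hv, rfl⟩ := Submodule.mem_sup.1 hr
    have hu' : u ∈ LinearMap.range f := by
      rw [Fintype.range_linearCombination]
      simpa using hu
    obtain ⟨c, rfl⟩ := hu'
    refine ⟨c, ?_⟩
    rw [LinearMap.comp_apply, map_add, left_eq_add, Submodule.mkQ_apply,
      Submodule.Quotient.mk_eq_zero, Ideal.smul_top_eq_map]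
    exact hn hv
  exact Module.Finite.of_surjective f hf

theorem inj_of_dim {A R : Type} [CommRing A] [CommRing R] [IsDomain A] [Algebra A R]
    [Algebra.IsIntegral A R] {d : ℕ} (hA : ringKrullDim A ≤ d) (hR : ringKrullDim R = d) :
    Function.Injective (algebraMap A R) := by
  rw [injective_iff_map_eq_zero]
  intro a ha
  by_contra h0
  have h1 := ringKrullDim_succ_le_of_surjective (algebraMap A R).rangeRestrict
    (algebraMap A R).rangeRestrict_surjective (mem_nonZeroDivisors_of_ne_zero h0)
    (Subtype.ext ha)
  have hint : Algebra.IsIntegral (algebraMap A R).range R := by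
    constructor
    intro x
    obtain ⟨q, hq, hq'⟩ := Algebra.IsIntegral.isIntegral (R := A) x
    refine ⟨q.map (algebraMap A R).rangeRestrict, hq.map _, ?_⟩
    rw [Polynomial.eval₂_map]
    exact hq'
  have h2 : ringKrullDim R ≤ ringKrullDim (algebraMap A R).range := by
    refine Order.krullDim_le_of_strictMono
      (PrimeSpectrum.comap (algebraMap (algebraMap A R).range R)) ?_
    intro P Q hPQ
    exact Ideal.IsIntegral.comap_lt_comap hPQ
  have h3 := (add_le_add_left h2 1).trans (h1.trans hA)
  rw [hR] at h3
  have : ((d + 1 : ℕ) : WithBot ℕ∞) ≤ (d : ℕ) := by exact_mod_cast h3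
  have := Nat.cast_le.1 this
  omega


namespace MvPS
open MvPowerSeries

theorem maxIdeal_eq (k : Type) [Field k] (d : ℕ) : maximalIdeal (MvPowerSeries (Fin d) k) =
    Ideal.span (Set.range (X : Fin d → MvPowerSeries (Fin d) k)) := by
  apply le_antisymm
  · intro f hf
    have := mem_pow_of_coeff (n := 1) (f := f) (fun x hx => by
      have hx0 : x = 0 := by
        rw [← Finsupp.degree_eq_zero_iff]; omega
      rw [mem_maximalIdeal, mem_nonunits_iff, MvPowerSeries.isUnit_iff_constantCoeff,
        isUnit_iff_ne_zero, not_not] at hf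
      rw [hx0]; exact hf)
    rwa [pow_one] at this
  · rw [Ideal.span_le]
    rintro _ ⟨i, rfl⟩
    rw [SetLike.mem_coe, mem_maximalIdeal, mem_nonunits_iff, MvPowerSeries.isUnit_iff_constantCoeff]
    simp

theorem dim_le (k : Type) [Field k] (d : ℕ) : ringKrullDim (MvPowerSeries (Fin d) k) ≤ d := by
  refine (ringKrullDim_le_spanFinrank_maximalIdeal _).trans ?_
  rw [maxIdeal_eq]
  have h1 := Submodule.spanFinrank_span_le_ncard_of_finite
    (R := MvPowerSeries (Fin d) k) (Set.finite_range (X : Fin d → MvPowerSeries (Fin d) k))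
  have h2 : (Set.range (X : Fin d → MvPowerSeries (Fin d) k)).ncard ≤ d := by
    rw [← Set.image_univ]
    refine (Set.ncard_image_le (Set.toFinite _)).trans ?_
    simp
  exact_mod_cast h1.trans h2

theorem exists_hom {k R : Type} [Field k] [CommRing R] (m : Ideal R) [IsAdicComplete m R] {d : ℕ}
    (σ : k →+* R) (y : Fin d → R) (hy : ∀ i, y i ∈ m) :
    ∃ φ : MvPowerSeries (Fin d) k →+* R, (∀ c, φ (C c) = σ c) ∧ ∀ i, φ (X i) = y i := by
  let e : MvPolynomial (Fin d) k →+* R := MvPolynomial.eval₂Hom σ y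
  have he : ∀ n, MvPolynomial.idealOfVars (Fin d) k ^ n ≤ (m ^ n).comap e := by
    intro n
    rw [← Ideal.map_le_iff_le_comap, Ideal.map_pow]
    refine Ideal.pow_right_mono ?_ n
    rw [MvPolynomial.idealOfVars, Ideal.map_span, Ideal.span_le]
    rintro _ ⟨_, ⟨i, rfl⟩, rfl⟩
    simpa [e] using hy i
  let f : ∀ n, MvPowerSeries (Fin d) k →+* R ⧸ m ^ n := fun n =>
    (Ideal.quotientMap (m ^ n) e (he n)).comp (truncTotalAlgHom (Fin d) k n).toRingHom
  have hf : ∀ n g, f n g = Ideal.Quotient.mk (m ^ n) (e (truncTotal n g)) := fun n g => rfl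
  have hcompat : ∀ {i j : ℕ} (hle : i ≤ j), (Ideal.Quotient.factorPow m hle).comp (f j) = f i := by
    intro i j hle
    ext g
    rw [RingHom.comp_apply, hf, hf]
    change Ideal.Quotient.mk (m ^ i) _ = _
    rw [Ideal.Quotient.mk_eq_mk_iff_sub_mem, ← map_sub]
    exact he i (truncTotal_sub_truncTotal_mem_pow_idealOfVars hle le_rfl g)
  have hpoly : ∀ q : MvPolynomial (Fin d) k,
      IsAdicComplete.liftRingHom m f hcompat (q : MvPowerSeries (Fin d) k) = e q := by
    intro q
    rw [← sub_eq_zero]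
    refine IsHausdorff.haus (inferInstance : IsHausdorff m R) _ fun n => ?_
    rw [SModEq.zero, smul_eq_mul, Ideal.mul_top, ← Ideal.Quotient.eq_zero_iff_mem, map_sub,
      IsAdicComplete.mk_liftRingHom, hf, ← map_sub, ← map_sub, Ideal.Quotient.eq_zero_iff_mem]
    refine he n ?_
    refine (MvPolynomial.mem_pow_idealOfVars_iff' ..).mpr (fun x hx ↦ ?_)
    rw [MvPolynomial.coeff_sub, sub_eq_zero, coeff_truncTotal _ hx, MvPolynomial.coeff_coe]
  refine ⟨IsAdicComplete.liftRingHom m f hcompat, fun c => ?_, fun i => ?_⟩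
  · rw [← MvPolynomial.coe_C, hpoly]; simp [e]
  · rw [← MvPolynomial.coe_X, hpoly]; simp [e]

end MvPS


theorem pow_mem_of_nonunit {R S : Type} [CommRing R] [IsNoetherianRing R] [IsLocalRing R]
    [IsAdicComplete (maximalIdeal R) R] [CommRing S] [IsDomain S] [Algebra R S]
    [Module.Finite R S] {t : S} (ht : ¬ IsUnit t) :
    ∃ n, t ^ n ∈ (maximalIdeal R).map (algebraMap R S) := by
  set I := (maximalIdeal R).map (algebraMap R S) with hI
  have hP : IsPrecomplete (maximalIdeal R) S := precomplete_of_finite _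
  have hC : IsAdicComplete (maximalIdeal R) S := { }
  have hC' : IsAdicComplete I S := (IsAdicComplete.map_algebraMap_iff _ _).2 hC
  have hH : HenselianRing S I := inferInstance
  have hfin : Module.Finite (R ⧸ maximalIdeal R) (S ⧸ I) := inferInstance
  have hA : IsArtinianRing (R ⧸ maximalIdeal R) := inferInstanceAs (IsArtinianRing (ResidueField R))
  have hA' : IsArtinianRing (S ⧸ I) := IsArtinianRing.of_finite (R ⧸ maximalIdeal R) _
  obtain ⟨n, y, hy⟩ := IsArtinian.exists_pow_succ_smul_dvd (Ideal.Quotient.mk I t) (1 : S ⧸ I)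
  obtain ⟨y, rfl⟩ := Ideal.Quotient.mk_surjective y
  simp only [smul_eq_mul, mul_one] at hy
  set T := Ideal.Quotient.mk I t with hT
  set Y := Ideal.Quotient.mk I y with hY
  have h1 : ∀ j, T ^ n = T ^ (n + j) * Y ^ j := by
    intro j
    induction j with
    | zero => simp
    | succ j ih =>
      calc T ^ n = T ^ j * T ^ n * Y ^ j := by rw [← pow_add, add_comm j n]; exact ih
        _ = T ^ j * (T ^ n.succ * Y) * Y ^ j := by rw [hy]
        _ = _ := by rw [Nat.succ_eq_add_one]; ring
  have h2 : T ^ (n + 1) = T ^ (n + 1) * (T ^ (n + 1) * Y ^ (n + 1)) := by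
    calc T ^ (n + 1) = T * T ^ n := by ring
      _ = T * (T ^ (n + (n + 1)) * Y ^ (n + 1)) := by rw [← h1]
      _ = _ := by ring
  set e := t ^ (n + 1) * y ^ (n + 1) with he
  have hee : Ideal.Quotient.mk I e = T ^ (n + 1) * Y ^ (n + 1) := by simp [e, T, Y]
  have hidem : Ideal.Quotient.mk I e * Ideal.Quotient.mk I e = Ideal.Quotient.mk I e := by
    rw [hee]
    conv_rhs => rw [h2]
    ring
  obtain ⟨a, ha, hae⟩ := hH.is_henselian (Polynomial.X ^ 2 - Polynomial.X)
    (by monicity!) e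
    (by
      rw [← Ideal.Quotient.eq_zero_iff_mem]
      simp [pow_two, hidem])
    (by
      refine IsUnit.of_mul_eq_one (2 * Ideal.Quotient.mk I e - 1) ?_
      simp
      linear_combination 4 * hidem)
  have ha' : a * (a - 1) = 0 := by
    have : a ^ 2 - a = 0 := by simpa [Polynomial.IsRoot] using ha
    linear_combination this
  rcases mul_eq_zero.1 ha' with h0 | h0
  · refine ⟨n + 1, ?_⟩
    rw [h0, zero_sub, neg_mem_iff] at hae
    rw [← Ideal.Quotient.eq_zero_iff_mem, map_pow, h2, ← hee, Ideal.Quotient.eq_zero_iff_mem.2 hae,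
      mul_zero]
  · exfalso
    apply ht
    rw [sub_eq_zero.1 h0] at hae
    have h3 := hH.jac hae
    rw [Ideal.mem_jacobson_bot] at h3
    have h4 := h3 (-1)
    have h5 : (1 - e) * -1 + 1 = e := by ring
    rw [h5] at h4
    exact isUnit_of_dvd_unit (by rw [he]; exact Dvd.dvd.mul_right (dvd_pow_self _ (by omega)) _) h4

theorem exists_pow_le {R : Type} [CommRing R] [IsDomain R] [IsNoetherianRing R] [IsLocalRing R]
    [IsAdicComplete (maximalIdeal R) R] (J : Ideal (RPlus R)) (hJ : J ≠ ⊤) (hJfg : J.FG) :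
    ∃ n, J ^ n ≤ (maximalIdeal R).map (algebraMap R (RPlus R)) := by
  refine Ideal.exists_pow_le_of_le_radical_of_fg ?_ hJfg
  intro t ht
  have hint : IsIntegral R t := Algebra.IsIntegral.isIntegral t
  let S := Algebra.adjoin R {t}
  have hfin : Module.Finite R S := Algebra.finite_adjoin_simple_of_isIntegral hint
  let t' : S := ⟨t, Algebra.subset_adjoin rfl⟩
  have hnu : ¬ IsUnit t' := fun h => hJ (Ideal.eq_top_of_isUnit_mem _ ht (h.map S.val))
  obtain ⟨n, hn⟩ := pow_mem_of_nonunit (R := R) hnu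
  refine ⟨n, ?_⟩
  have h1 := Ideal.mem_map_of_mem S.val.toRingHom hn
  rw [Ideal.map_map] at h1
  have h2 : S.val.toRingHom.comp (algebraMap R S) = algebraMap R (RPlus R) := rfl
  rw [h2] at h1
  exact h1


theorem mem_JT_iff {A R Ω : Type} [CommRing A] [CommRing R] [Field Ω] [Algebra A R] [Algebra R Ω]
    [Algebra A Ω] [IsScalarTower A R Ω] [Algebra.IsIntegral A R] (I : Ideal A)
    (z : integralClosure R Ω) : (z : Ω) ∈ JT A Ω I ↔
      z ∈ I.map (algebraMap A (integralClosure R Ω)) := by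
  constructor
  · intro hz
    have key : ∀ w ∈ JT A Ω I, ∃ v : integralClosure R Ω, (v : Ω) = w ∧
        v ∈ I.map (algebraMap A (integralClosure R Ω)) := by
      intro w hw
      refine Submodule.smul_induction_on hw ?_ ?_
      · intro r hr n hn
        have hn' : IsIntegral R n := IsIntegral.tower_top (R := A) hn
        refine ⟨r • ⟨n, hn'⟩, rfl, ?_⟩
        rw [Algebra.smul_def]
        exact Ideal.mul_mem_right _ _ (Ideal.mem_map_of_mem _ hr)
      · rintro _ _ ⟨v, rfl, hv⟩ ⟨v', rfl, hv'⟩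
        exact ⟨v + v', rfl, add_mem hv hv'⟩
    obtain ⟨v, hv, hv'⟩ := key _ hz
    rwa [Subtype.ext hv] at hv'
  · intro hz
    rw [Ideal.map] at hz
    induction hz using Submodule.span_induction with
    | mem x h =>
      obtain ⟨a, ha, rfl⟩ := h
      have : ((algebraMap A (integralClosure R Ω) a : integralClosure R Ω) : Ω) = a • (1 : Ω) := by
        rw [Algebra.smul_def, mul_one]; rfl
      rw [this]
      exact Submodule.smul_mem_smul ha (one_mem (integralClosure A Ω))
    | zero => exact zero_mem _
    | add x y _ _ hx hy => exact add_mem hx hy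
    | smul r x _ hx => exact JT_mul hx (isIntegral_trans (R := A) _ r.2)

theorem final_aux {R : Type} [CommRing R] [IsDomain R] [IsNoetherianRing R] [IsLocalRing R]
    [IsAdicComplete (maximalIdeal R) R]
    (p : ℕ) [Fact p.Prime] [CharP R p]
    (n : ℕ) (x : Fin n → R) (hx : IsPartialSOP R x)
    (J : Ideal (RPlus R)) (hJ : J ≠ ⊤) (hJfg : J.FG) (u : RPlus R)
    (hu : ∀ N, 0 < N →
      u ∈ Ideal.map (algebraMap R (RPlus R)) (Ideal.span (Set.range x)) ⊔ J ^ N) :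
    u ∈ Ideal.map (algebraMap R (RPlus R)) (Ideal.span (Set.range x)) := by
  obtain ⟨d, hd, y, ⟨hdim, hrad⟩, hyx⟩ := hx
  obtain ⟨σ, hσ⟩ := exists_coeff_field R p
  have hy : ∀ i, y i ∈ maximalIdeal R := fun i => by
    rw [← hrad]; exact Ideal.le_radical (Ideal.subset_span ⟨i, rfl⟩)
  obtain ⟨φ, hφC, hφX⟩ := MvPS.exists_hom (maximalIdeal R) σ y hy
  have hk : CharP (ResidueField R) p := RingHom.charP σ σ.injective p
  let A := MvPowerSeries (Fin d) (ResidueField R)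
  let Ω := AlgebraicClosure (FractionRing R)
  let _ : Algebra A R := φ.toAlgebra
  have hdom : IsDomain A := NoZeroDivisors.to_isDomain A
  have hRΩ : Function.Injective (algebraMap R Ω) := by
    rw [IsScalarTower.algebraMap_eq R (FractionRing R) Ω]
    exact (algebraMap (FractionRing R) Ω).injective.comp (IsFractionRing.injective R (FractionRing R))
  have hst : IsScalarTower A R Ω := inferInstance
  have hmA : maximalIdeal A = Ideal.span (Set.range MvPowerSeries.X) := MvPS.maxIdeal_eq _ _
  have hcA : IsAdicComplete (maximalIdeal A) A := by
    rw [hmA]; infer_instance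
  have hmap : (maximalIdeal A).map (algebraMap A R) = Ideal.span (Set.range y) := by
    rw [hmA, Ideal.map_span, ← Set.range_comp]
    congr 2
    funext i
    exact hφX i
  have hle : Ideal.span (Set.range y) ≤ maximalIdeal R := by
    rw [← hrad]; exact Ideal.le_radical
  obtain ⟨r, hr⟩ := Ideal.exists_pow_le_of_le_radical_of_fg (I := maximalIdeal R)
    (J := Ideal.span (Set.range y)) hrad.ge (IsNoetherian.noetherian _)
  have hfin : Module.Finite A R := by
    refine finite_of_complete (maximalIdeal A) ?_ ?_ ⟨r, by rw [hmap]; exact hr⟩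
    · intro a
      refine ⟨MvPowerSeries.C (residue R a), ?_⟩
      change a - φ _ ∈ _
      rw [hφC, ← residue_eq_zero_iff, map_sub, hσ, sub_self]
    · rw [hmap]
      exact fun h => Ideal.IsPrime.ne_top' (top_le_iff.1 (h.symm.le.trans hle))
  have hinj : Function.Injective (algebraMap A R) := inj_of_dim (MvPS.dim_le _ _) hdim
  have hinjΩ : Function.Injective (algebraMap A Ω) :=
    by
    rw [IsScalarTower.algebraMap_eq A R Ω]
    exact hRΩ.comp hinj
  have hchA : CharP A p := RingHom.charP φ hinj p
  have hchΩ : CharP Ω p := charP_of_injective_algebraMap hRΩ p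
  have hf : FaithfulSMul A Ω := (faithfulSMul_iff_algebraMap_injective _ _).2 hinjΩ
  have hf' : FaithfulSMul A R := (faithfulSMul_iff_algebraMap_injective _ _).2 hinj
  let _ : Algebra (FractionRing A) Ω := FractionRing.liftAlgebra A Ω
  have hst2 : IsScalarTower A (FractionRing A) Ω := inferInstance
  have halgR : Algebra.IsAlgebraic R Ω :=
    (IsFractionRing.comap_isAlgebraic_iff (A := R) (K := FractionRing R) (C := Ω)).2 inferInstance
  have halgA : Algebra.IsAlgebraic A Ω := Algebra.IsAlgebraic.trans A R Ω
  have halgK : Algebra.IsAlgebraic (FractionRing A) Ω :=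
    (IsFractionRing.comap_isAlgebraic_iff (A := A) (K := FractionRing A) (C := Ω)).1 halgA
  let I : Ideal A := Ideal.span (Set.range fun i : Fin n => MvPowerSeries.X (Fin.castLE hd i))
  have hcomp : (algebraMap R (RPlus R)).comp (algebraMap A R) = algebraMap A (RPlus R) := rfl
  have hImap : I.map (algebraMap A (RPlus R)) =
      Ideal.map (algebraMap R (RPlus R)) (Ideal.span (Set.range x)) := by
    rw [← hcomp, ← Ideal.map_map]
    congr 1
    rw [Ideal.map_span, ← Set.range_comp]
    congr 2
    funext i
    rw [← hyx]
    exact hφX _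
  obtain ⟨q, hq⟩ := exists_pow_le J hJ hJfg
  have hJN : ∀ N, J ^ (q * (r * N) + 1) ≤ (maximalIdeal A ^ N).map (algebraMap A (RPlus R)) := by
    intro N
    calc J ^ (q * (r * N) + 1) ≤ J ^ (q * (r * N)) := Ideal.pow_le_pow_right (Nat.le_succ _)
      _ = ((J ^ q) ^ (r * N)) := pow_mul _ _ _
      _ ≤ ((maximalIdeal R).map (algebraMap R (RPlus R))) ^ (r * N) := Ideal.pow_right_mono hq _
      _ = (((maximalIdeal R) ^ r).map (algebraMap R (RPlus R))) ^ N := by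
        rw [pow_mul, Ideal.map_pow]
      _ ≤ ((Ideal.span (Set.range y)).map (algebraMap R (RPlus R))) ^ N :=
        Ideal.pow_right_mono (Ideal.map_mono hr) _
      _ = _ := by rw [← hmap, Ideal.map_map, hcomp, Ideal.map_pow]
  have hmem : ∀ N, (u : Ω) ∈ JT A Ω (I ⊔ maximalIdeal A ^ N) := by
    intro N
    rw [mem_JT_iff (R := R) (Ω := Ω), Ideal.map_sup]
    have h1 := hu (q * (r * N) + 1) (Nat.succ_pos _)
    rw [← hImap] at h1
    exact sup_le_sup_left (hJN N) _ h1
  have := M_main (K := FractionRing A) (p := p) MvPS.propC hmem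
  rw [mem_JT_iff (R := R) (Ω := Ω)] at this
  rw [← hImap]
  exact this


/-- For a complete local domain `R` of prime characteristic `p`, part of a
system of parameters `x₁, …, xₙ` and a proper finitely generated ideal `J` of `R⁺`,
`⋂_{N ≥ 1} ((x₁, …, xₙ)R⁺ + J^N) = (x₁, …, xₙ)R⁺`. -/
theorem stmt8 (R : Type) [CommRing R] [IsDomain R] [IsNoetherianRing R] [IsLocalRing R]
    [IsAdicComplete (maximalIdeal R) R]
    (p : ℕ) [Fact p.Prime] [CharP R p]
    (n : ℕ) (x : Fin n → R) (hx : IsPartialSOP R x)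
    (J : Ideal (RPlus R)) (hJ : J ≠ ⊤) (hJfg : J.FG) :
    (⨅ (N : ℕ) (_ : 0 < N),
        (Ideal.map (algebraMap R (RPlus R)) (Ideal.span (Set.range x)) ⊔ J ^ N)) =
      Ideal.map (algebraMap R (RPlus R)) (Ideal.span (Set.range x)) := by
  apply le_antisymm
  · intro u hu
    refine final_aux p n x hx J hJ hJfg u fun N hN => ?_
    rw [Ideal.mem_iInf] at hu
    have h1 := hu N
    rw [Ideal.mem_iInf] at h1
    exact h1 hN
  · exact le_iInf fun N => le_iInf fun _ => le_sup_left
end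

section
/- Let (B, m_B) be a quasilocal ring (a commutative ring, not necessarily Noetherian, with a unique maximal ideal m_B), and let x, y ∈ m_B be a permutable regular sequence on B (i.e., both x, y and y, x are regular sequences on B). Let t be an indeterminate and let B(t) be the localization of B[t] at the prime ideal m_B·B[t]. Then for every positive integer N, (x − y t, y^N)B(t) ∩ B[t] = (x − y t, y^N)B[t]. -/
open IsLocalRing TensorProduct
set_option synthInstance.maxHeartbeats 1000000
set_option maxHeartbeats 1000000

open scoped Pointwise in
theorem aux_quot (B : Type) [CommRing B] (x y : B)
    (h : RingTheory.Sequence.IsRegular B [y, x]) :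
    (∀ a, y * a = 0 → a = 0) ∧ (∀ a, y ∣ x * a → y ∣ a) := by
  have h1 := h.toIsWeaklyRegular
  rw [RingTheory.Sequence.isWeaklyRegular_cons_iff,
    RingTheory.Sequence.isWeaklyRegular_cons_iff] at h1
  obtain ⟨h1, h2, -⟩ := h1
  refine ⟨fun a ha => h1 (by simpa using ha), fun a ha => ?_⟩
  have h3 := (isSMulRegular_quotient_iff_mem_of_smul_mem (y • (⊤ : Submodule B B)) x).1 h2 a
  have key : ∀ b : B, b ∈ (y • (⊤ : Submodule B B)) ↔ y ∣ b := by
    intro b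
    rw [Submodule.mem_smul_pointwise_iff_exists]
    constructor
    · rintro ⟨c, -, rfl⟩
      exact ⟨c, rfl⟩
    · rintro ⟨c, rfl⟩
      exact ⟨c, trivial, rfl⟩
  rw [key, key] at h3
  exact h3 ha

theorem aux_base (B : Type) [CommRing B] [IsLocalRing B] (J : Ideal B) (f g : Polynomial B)
    (hf : f ∉ Ideal.map (Polynomial.C (R := B)) (maximalIdeal B))
    (h : f * g ∈ Ideal.map (Polynomial.C (R := B)) J) :
    g ∈ Ideal.map (Polynomial.C (R := B)) J := by
  have key : ∀ p : Polynomial B, p ∈ Ideal.map (Polynomial.C (R := B)) J ↔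
      p.map (Ideal.Quotient.mk J) = 0 := by
    intro p
    rw [Ideal.mem_map_C_iff, Polynomial.ext_iff]
    simp [Ideal.Quotient.eq_zero_iff_mem]
  rw [key] at h ⊢
  rw [Polynomial.map_mul] at h
  rw [Ideal.mem_map_C_iff] at hf
  push Not at hf
  obtain ⟨n, hn⟩ := hf
  have hu : IsUnit (f.coeff n) := by simpa using hn
  have hnz : f.map (Ideal.Quotient.mk J) ∈ nonZeroDivisors (Polynomial (B ⧸ J)) := by
    by_contra hc
    rw [Polynomial.notMem_nonZeroDivisors_iff] at hc
    obtain ⟨a, hne, ha⟩ := hc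
    apply hne
    have := congrArg (fun p => Polynomial.coeff p n) ha
    simp only [Polynomial.coeff_smul, Polynomial.coeff_map, Polynomial.coeff_zero,
      smul_eq_mul] at this
    exact ((hu.map (Ideal.Quotient.mk J)).mul_left_eq_zero).1 this
  rw [mul_comm] at h
  exact (mul_right_mem_nonZeroDivisors_eq_zero_iff hnz).1 h

theorem aux_main (B : Type) [CommRing B] [IsLocalRing B] (x y : B)
    (h1 : ∀ a, y * a = 0 → a = 0) (h2 : ∀ a, y ∣ x * a → y ∣ a) (f : Polynomial B)
    (hf : f ∉ Ideal.map (Polynomial.C (R := B)) (maximalIdeal B)) (N : ℕ) (g : Polynomial B)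
    (h : f * g ∈ Ideal.span {Polynomial.C x - Polynomial.C y * Polynomial.X,
      Polynomial.C y ^ (N + 1)}) :
    g ∈ Ideal.span {Polynomial.C x - Polynomial.C y * Polynomial.X,
      Polynomial.C y ^ (N + 1)} := by
  have p1 : ∀ n : ℕ, ∀ p : Polynomial B, Polynomial.C y ^ n * p = 0 → p = 0 := by
    intro n
    induction n with
    | zero => intro p hp; simpa using hp
    | succ n ih =>
      intro p hp
      apply ih
      rw [pow_succ', mul_assoc] at hp
      ext k
      apply h1
      have := congrArg (fun p => Polynomial.coeff p k) hp
      simpa only [Polynomial.coeff_C_mul, Polynomial.coeff_zero] using this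
  have p2 : ∀ n : ℕ, ∀ d : Polynomial B, Polynomial.C y ^ n ∣
      d * (Polynomial.C x - Polynomial.C y * Polynomial.X) → Polynomial.C y ^ n ∣ d := by
    have q : ∀ d : Polynomial B, Polynomial.C y ∣
        d * (Polynomial.C x - Polynomial.C y * Polynomial.X) → Polynomial.C y ∣ d := by
      rintro d ⟨e, he⟩
      have : Polynomial.C y ∣ Polynomial.C x * d := ⟨e + d * Polynomial.X, by
        linear_combination he⟩
      rw [Polynomial.C_dvd_iff_dvd_coeff] at this ⊢
      intro i
      apply h2
      simpa using this i
    intro n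
    induction n with
    | zero => intro d _; simp
    | succ n ih =>
      rintro d ⟨e, he⟩
      obtain ⟨d', rfl⟩ := q d ⟨Polynomial.C y ^ n * e, by rw [he]; ring⟩
      rw [pow_succ']
      apply mul_dvd_mul_left
      apply ih
      refine ⟨e, ?_⟩
      rw [← sub_eq_zero]
      apply p1 1
      linear_combination he
  have e1 : Ideal.span {Polynomial.C x - Polynomial.C y * Polynomial.X, Polynomial.C y} =
      Ideal.map (Polynomial.C (R := B)) (Ideal.span {x, y}) := by
    rw [Ideal.map_span, Set.image_pair]
    apply le_antisymm
    · rw [Ideal.span_le]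
      rintro z (rfl | rfl)
      · exact Ideal.mem_span_pair.2 ⟨1, -Polynomial.X, by ring⟩
      · exact Ideal.mem_span_pair.2 ⟨0, 1, by ring⟩
    · rw [Ideal.span_le]
      rintro z (rfl | rfl)
      · exact Ideal.mem_span_pair.2 ⟨1, Polynomial.X, by ring⟩
      · exact Ideal.mem_span_pair.2 ⟨0, 1, by ring⟩
  induction N with
  | zero =>
    rw [zero_add, pow_one, e1] at h ⊢
    exact aux_base B _ f g hf h
  | succ N ih =>
    obtain ⟨d, e, hde⟩ := Ideal.mem_span_pair.1 h
    obtain ⟨a, b, hab⟩ := Ideal.mem_span_pair.1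
      (ih (Ideal.mem_span_pair.2 ⟨d, e * Polynomial.C y, by rw [← hde]; ring⟩))
    have h3 : Polynomial.C y ^ (N + 1) * (f * b - e * Polynomial.C y) =
        (d - f * a) * (Polynomial.C x - Polynomial.C y * Polynomial.X) := by
      linear_combination f * hab - hde
    obtain ⟨d', hd'⟩ := p2 (N + 1) _ ⟨_, h3.symm⟩
    have h4 : f * b - e * Polynomial.C y -
        d' * (Polynomial.C x - Polynomial.C y * Polynomial.X) = 0 := by
      apply p1 (N + 1)
      rw [hd'] at h3
      linear_combination h3
    have h5 : f * b ∈ Ideal.map (Polynomial.C (R := B)) (Ideal.span {x, y}) := by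
      rw [← e1]
      exact Ideal.mem_span_pair.2 ⟨d', e, by linear_combination -h4⟩
    have h6 := aux_base B _ f b hf h5
    rw [← e1] at h6
    obtain ⟨u, v, huv⟩ := Ideal.mem_span_pair.1 h6
    exact Ideal.mem_span_pair.2 ⟨a + u * Polynomial.C y ^ (N + 1), v, by
      linear_combination hab + Polynomial.C y ^ (N + 1) * huv⟩

/-- For a quasilocal ring `B` and a permutable regular sequence `x, y` in the
maximal ideal, `(x - yt, y^N)B(t) ∩ B[t] = (x - yt, y^N)B[t]`, where `B(t)` is the
localization of `B[t]` at `m_B·B[t]`. -/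
theorem stmt10 (B : Type) [CommRing B] [IsLocalRing B] (x y : B)
    (hx : x ∈ maximalIdeal B) (hy : y ∈ maximalIdeal B)
    (hreg : RingTheory.Sequence.IsRegular B [x, y])
    (hreg' : RingTheory.Sequence.IsRegular B [y, x])
    [hP : (Ideal.map (Polynomial.C (R := B)) (maximalIdeal B)).IsPrime]
    (N : ℕ) (hN : 0 < N) :
    Ideal.comap
        (algebraMap (Polynomial B)
          (Localization.AtPrime (Ideal.map Polynomial.C (maximalIdeal B))))
        (Ideal.map
          (algebraMap (Polynomial B)
            (Localization.AtPrime (Ideal.map Polynomial.C (maximalIdeal B))))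
          (Ideal.span {Polynomial.C x - Polynomial.C y * Polynomial.X,
            Polynomial.C y ^ N})) =
      Ideal.span {Polynomial.C x - Polynomial.C y * Polynomial.X, Polynomial.C y ^ N} := by
  obtain ⟨h1, h2⟩ := aux_quot B x y hreg'
  obtain ⟨M, rfl⟩ : ∃ M, N = M + 1 := ⟨N - 1, by omega⟩
  apply le_antisymm _ Ideal.le_comap_map
  intro g hg
  rw [Ideal.mem_comap, IsLocalization.algebraMap_mem_map_algebraMap_iff
    (Ideal.map (Polynomial.C (R := B)) (maximalIdeal B)).primeCompl] at hg
  obtain ⟨f, hf, hfg⟩ := hg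
  exact aux_main B x y h1 h2 f hf M g hfg
end

section
/- Let (B, m_B) be a quasilocal ring (a commutative ring, not necessarily Noetherian, with a unique maximal ideal m_B), and let x, y ∈ m_B be a permutable regular sequence on B (i.e., both x, y and y, x are regular sequences on B). Let t be an indeterminate. Then for every positive integer N, (x − y t, y^N)B[t] ∩ B = (x, y)^N B, where the intersection with B is taken via the inclusion of constants B ⊆ B[t]. -/
open IsLocalRing TensorProduct
set_option synthInstance.maxHeartbeats 1000000
set_option maxHeartbeats 1000000

theorem aux_step {B : Type} [CommRing B] (x y : B) (n : ℕ) (z : B)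
    (hz : z ∈ Ideal.span {x, y} ^ (n + 1)) :
    ∃ a ∈ Ideal.span {x, y} ^ n, ∃ b ∈ Ideal.span {x, y} ^ n, z = x * a + y * b := by
  rw [pow_succ'] at hz
  nth_rewrite 1 [Ideal.span_insert] at hz
  rw [Ideal.sup_mul, Submodule.mem_sup] at hz
  obtain ⟨p, hp, q, hq, rfl⟩ := hz
  obtain ⟨a, ha, rfl⟩ := Ideal.mem_span_singleton_mul.1 hp
  obtain ⟨b, hb, rfl⟩ := Ideal.mem_span_singleton_mul.1 hq
  exact ⟨a, ha, b, hb, rfl⟩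

theorem aux_dec {B : Type} [CommRing B] (x y : B) (n : ℕ) : ∀ z : B,
    z ∈ Ideal.span {x, y} ^ (n + 1) →
    ∃ c, ∃ u ∈ Ideal.span {x, y} ^ n, z = c * x ^ (n + 1) + y * u := by
  have hxI : x ∈ Ideal.span {x, y} := Ideal.subset_span (by simp)
  induction n with
  | zero =>
    intro z hz
    obtain ⟨a, ha, b, hb, rfl⟩ := aux_step x y 0 z hz
    exact ⟨a, b, hb, by ring⟩
  | succ n ih =>
    intro z hz
    obtain ⟨a, ha, b, hb, rfl⟩ := aux_step x y (n + 1) z hz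
    obtain ⟨c, u, hu, rfl⟩ := ih a ha
    refine ⟨c, x * u + b, Ideal.add_mem _ ?_ hb, by ring⟩
    rw [pow_succ']
    exact Ideal.mul_mem_mul hxI hu

theorem aux_colon {B : Type} [CommRing B] (x y : B)
    (h1 : ∀ a : B, y * a = 0 → a = 0) (h2 : ∀ a : B, y ∣ x * a → y ∣ a) (n : ℕ) (f : B)
    (hf : y * f ∈ Ideal.span {x, y} ^ (n + 1)) : f ∈ Ideal.span {x, y} ^ n := by
  have hxI : x ∈ Ideal.span {x, y} := Ideal.subset_span (by simp)
  obtain ⟨c, u, hu, h⟩ := aux_dec x y n _ hf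
  have h3 : ∀ k : ℕ, ∀ c : B, y ∣ c * x ^ k → y ∣ c := by
    intro k
    induction k with
    | zero => intro c hc; simpa using hc
    | succ k ih =>
      intro c hc
      apply ih
      apply h2
      convert hc using 1
      ring
  obtain ⟨d, rfl⟩ := h3 (n + 1) c ⟨f - u, by linear_combination -h⟩
  have h4 : f - u - d * x ^ (n + 1) = 0 := h1 _ (by linear_combination h)
  have : f = u + d * x * x ^ n := by linear_combination h4
  rw [this]
  exact Ideal.add_mem _ hu (Ideal.mul_mem_left _ _ (Ideal.pow_mem_pow hxI n))

/-- For a quasilocal ring `B` and a permutable regular sequence `x, y` in the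
maximal ideal, `(x - yt, y^N)B[t] ∩ B = (x, y)^N B`. -/
theorem stmt11 (B : Type) [CommRing B] [IsLocalRing B] (x y : B)
    (hx : x ∈ maximalIdeal B) (hy : y ∈ maximalIdeal B)
    (hreg : RingTheory.Sequence.IsRegular B [x, y])
    (hreg' : RingTheory.Sequence.IsRegular B [y, x])
    (N : ℕ) (hN : 0 < N) :
    Ideal.comap (Polynomial.C (R := B))
        (Ideal.span {Polynomial.C x - Polynomial.C y * Polynomial.X,
          Polynomial.C y ^ N}) =
      Ideal.span {x, y} ^ N := by
  have h12 := hreg'.toIsWeaklyRegular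
  rw [RingTheory.Sequence.isWeaklyRegular_cons_iff,
    RingTheory.Sequence.isWeaklyRegular_cons_iff] at h12
  obtain ⟨hy1, hx1, -⟩ := h12
  have h1 : ∀ a : B, y * a = 0 → a = 0 := fun a ha => hy1 (by simpa using ha)
  have h2 : ∀ a : B, y ∣ x * a → y ∣ a := by
    intro a ha
    have e : ∀ b : B, y ∣ b ↔ b ∈ (open Pointwise in y • (⊤ : Submodule B B)) := by
      intro b
      rw [Submodule.mem_smul_pointwise_iff_exists]
      simp [dvd_def, eq_comm]
    rw [e] at ha ⊢
    rw [isSMulRegular_quotient_iff_mem_of_smul_mem] at hx1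
    exact hx1 a ha
  obtain ⟨n, rfl⟩ : ∃ n, N = n + 1 := ⟨N - 1, by omega⟩
  have hxI : x ∈ Ideal.span {x, y} := Ideal.subset_span (by simp)
  have hyI : y ∈ Ideal.span {x, y} := Ideal.subset_span (by simp)
  apply le_antisymm
  · intro b hb
    rw [Ideal.mem_comap, Ideal.mem_span_pair] at hb
    obtain ⟨f, g, h⟩ := hb
    have hc : ∀ i, y * f.coeff i = x * f.coeff (i + 1) + y ^ (n + 1) * g.coeff (i + 1) := by
      intro i
      have := congrArg (fun p => Polynomial.coeff p (i + 1)) h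
      simp only [mul_sub, ← mul_assoc, ← Polynomial.C_pow, Polynomial.coeff_add,
        Polynomial.coeff_sub, Polynomial.coeff_mul_X, Polynomial.coeff_mul_C,
        Polynomial.coeff_C_succ] at this
      linear_combination -this
    have h0 : b = x * f.coeff 0 + y ^ (n + 1) * g.coeff 0 := by
      have := congrArg (fun p => Polynomial.coeff p 0) h
      simp only [mul_sub, ← mul_assoc, ← Polynomial.C_pow, Polynomial.coeff_add,
        Polynomial.coeff_sub, Polynomial.coeff_mul_X_zero, Polynomial.coeff_mul_C,
        Polynomial.coeff_C_zero] at this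
      linear_combination -this
    have key : ∀ k i, f.natDegree < i + k → f.coeff i ∈ Ideal.span {x, y} ^ n := by
      intro k
      induction k with
      | zero =>
        intro i hi
        rw [Polynomial.coeff_eq_zero_of_natDegree_lt (by simpa using hi)]
        exact Ideal.zero_mem _
      | succ k ih =>
        intro i hi
        apply aux_colon x y h1 h2
        rw [hc]
        refine Ideal.add_mem _ ?_ (Ideal.mul_mem_right _ _ (Ideal.pow_mem_pow hyI _))
        rw [pow_succ']
        exact Ideal.mul_mem_mul hxI (ih (i + 1) (by omega))
    rw [h0]
    refine Ideal.add_mem _ ?_ (Ideal.mul_mem_right _ _ (Ideal.pow_mem_pow hyI _))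
    rw [pow_succ']
    exact Ideal.mul_mem_mul hxI (key (f.natDegree + 1) 0 (by omega))
  · rw [← Ideal.map_le_iff_le_comap, Ideal.map_pow]
    set s := Polynomial.C x - Polynomial.C y * Polynomial.X with hs
    have hle : Ideal.map Polynomial.C (Ideal.span {x, y}) ≤
        Ideal.span {s, Polynomial.C y} := by
      rw [Ideal.map_span, Ideal.span_le]
      rintro _ ⟨a, (rfl | rfl), rfl⟩
      · exact Ideal.mem_span_pair.2 ⟨1, Polynomial.X, by rw [hs]; ring⟩
      · exact Ideal.subset_span (by simp)
    refine (Ideal.pow_right_mono hle _).trans ?_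
    intro z hz
    rw [Set.pair_comm] at hz
    have dec : ∀ m : ℕ, ∀ z, z ∈ Ideal.span {Polynomial.C y, s} ^ (m + 1) →
        z ∈ Ideal.span {s, Polynomial.C y ^ (m + 1)} := by
      intro m z hz
      rw [Set.pair_comm] at hz
      have hyx := hz
      rw [Set.pair_comm] at hyx
      obtain ⟨c, u, hu, rfl⟩ := aux_dec (Polynomial.C y) s m z hyx
      exact Ideal.mem_span_pair.2 ⟨u, c, by ring⟩
    exact dec n z hz
end
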